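/- For every (s,x) ∈ D_T and every t ∈ [s,T), one has, almost surely, v(t ∧ τ^{s,x}, X^{s,x}_{t ∧ τ^{s,x}}) = E[1_{A^{s,x}} | 𝔉_t], where A^{s,x} := {X^{s,x}_u < g(u) for all u ∈ [s,T)}. In particular the stopped process t ↦ v(t ∧ τ^{s,x}, X^{s,x}_{t ∧ τ^{s,x}}) is a bounded (𝔉_t)-martingale on [s,T) with initial value v(s,x) = P(A^{s,x}). -/

import Mathlib

/-!
The assertion is the Markov property of `X` at the time `t`: on the event that the path has not
crossed `g` by time `t`, the conditional probability given `𝔉_t` of not crossing later is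
`v(t, X_t)`; on the complementary event both sides vanish, because `v` is zero on the boundary.
The Markov property is extracted from the martingale problem alone, by an elementary route that the
smoothness of `σ` makes possible.

* The Lamperti transform `Φ(t,x)`, with `∂ₓΦ = 1/σ`, reduces the diffusion coefficient to `1`, and
  under (C2), (C3) the drift `LΦ` is Lipschitz in space (`exists_lampertiData`).
* Testing the martingale problem with `χ(x) cos(l Φ(t,x) - c)`, for space cutoffs `χ` increasing
  to `1`, shows that the noise `W_u = Φ(u, X_u) - ∫ LΦ(r, X_r) dr` satisfies
  `E[e^{il(W_b - W_a)} | 𝔉_a] = e^{-l²(b-a)/2}`, which is Lévy's characterisation of Brownian motion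
  (`levyBM_noise`). No stochastic integral is needed: only a product rule for a martingale times a
  process with bounded derivative (`product_rule`).
* Consequently the increments of `W` after `t` are independent of `𝔉_t`, and their law is the same
  for all the processes `X^{s,x}` (`LevyBM.map_prod_incr`).
* The path of `Φ(u, X_u)`, `u ≥ t`, solves an integral equation with Lipschitz drift driven by `W`, so
  the Euler scheme rebuilds it, path by path, from its value at `t` and the increments of `W` after
  `t` (`tendsto_euler`). Non-crossing after `t` is therefore membership of this pair in a fixed
  measurable set (`LampertiData.survives_iff`).

Applied to `X^{t,y}`, these facts express `v(t,y)` as the mass of a section of that set, so `v(t,·)` is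
measurable; applied to `X^{s,x}`, they give `P(B ∩ {no crossing after t}) = ∫_B v(t, X_t)` for
`B ∈ 𝔉_t` (`measure_inter_survives`). This is the defining property of the conditional expectation,
and the martingale property is then the tower property.
-/

open MeasureTheory Set Filter Topology

noncomputable section

variable {Ω : Type*}

/-- Partial derivative in the time variable. -/
def pderivT (f : ℝ → ℝ → ℝ) (s x : ℝ) : ℝ := deriv (fun s' => f s' x) s

/-- Partial derivative in the space variable. -/
def pderivX (f : ℝ → ℝ → ℝ) (s x : ℝ) : ℝ := deriv (f s) x

/-- Second partial derivative in the space variable. -/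
def pderivXX (f : ℝ → ℝ → ℝ) (s x : ℝ) : ℝ := deriv (deriv (f s)) x

/-- The differential operator `L` associated with drift `μ` and diffusion `σ`:
`(Lf)(s,x) = ∂ₛf + μ ∂ₓf + ½σ² ∂ₓₓf`. -/
def genOp (μ σ : ℝ → ℝ → ℝ) (f : ℝ → ℝ → ℝ) (s x : ℝ) : ℝ :=
  pderivT f s x + μ s x * pderivX f s x + (1 / 2) * (σ s x) ^ 2 * pderivXX f s x

/-- `f` belongs to `C^{1,2}(U)`: the derivatives `∂ₛf`, `∂ₓf`, `∂ₓₓf` exist and are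
continuous on `U`. -/
def C12On (f : ℝ → ℝ → ℝ) (U : Set (ℝ × ℝ)) : Prop :=
  (∀ p ∈ U, DifferentiableAt ℝ (fun s => f s p.2) p.1) ∧
  (∀ p ∈ U, DifferentiableAt ℝ (f p.1) p.2) ∧
  (∀ p ∈ U, DifferentiableAt ℝ (deriv (f p.1)) p.2) ∧
  ContinuousOn (fun p : ℝ × ℝ => pderivT f p.1 p.2) U ∧
  ContinuousOn (fun p : ℝ × ℝ => pderivX f p.1 p.2) U ∧
  ContinuousOn (fun p : ℝ × ℝ => pderivXX f p.1 p.2) U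

/-- Condition (C1): continuity, positivity of `σ`, linear-growth-type bounds and local
Lipschitz continuity. -/
def CondC1 (T : ℝ) (μ σ : ℝ → ℝ → ℝ) : Prop :=
  ContinuousOn (fun p : ℝ × ℝ => μ p.1 p.2) (Icc 0 T ×ˢ (univ : Set ℝ)) ∧
  ContinuousOn (fun p : ℝ × ℝ => σ p.1 p.2) (Icc 0 T ×ˢ (univ : Set ℝ)) ∧
  (∀ t ∈ Icc (0:ℝ) T, ∀ x : ℝ, 0 < σ t x) ∧
  (∃ K : ℝ, ∀ t ∈ Icc (0:ℝ) T, ∀ x : ℝ,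
    x * μ t x ≤ K * (1 + x ^ 2) ∧ (σ t x) ^ 2 ≤ K * (1 + x ^ 2)) ∧
  (∀ a : ℝ, 0 < a → ∃ Ka : ℝ, ∀ t ∈ Icc (0:ℝ) T, ∀ x ∈ Ioo (-a) a, ∀ y ∈ Ioo (-a) a,
    |μ t x - μ t y| + |(σ t x) ^ 2 - (σ t y) ^ 2| ≤ Ka * |x - y|)

/-- Condition (C2): uniform ellipticity. -/
def CondC2 (T : ℝ) (σ : ℝ → ℝ → ℝ) : Prop :=
  ∃ σ₀ : ℝ, 0 < σ₀ ∧ ∀ t ∈ Icc (0:ℝ) T, ∀ x : ℝ, σ₀ ≤ σ t x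

/-- Hölder continuity on `[0,T] × ℝ` with exponent `α` in space and `α/2` in time. -/
def HolderTX (T α : ℝ) (φ : ℝ → ℝ → ℝ) : Prop :=
  ∃ C : ℝ, ∀ t ∈ Icc (0:ℝ) T, ∀ t' ∈ Icc (0:ℝ) T, ∀ x x' : ℝ,
    |φ t x - φ t' x'| ≤ C * (|x - x'| ^ α + |t - t'| ^ (α / 2))

/-- Condition (C3): boundedness of the coefficients and Hölder continuity of
`μ, ∂ₓμ, σ, ∂ₜσ, ∂ₓσ, ∂ₓ∂ₜσ, ∂ₓₓσ` with exponent `α` in `x` and `α/2` in `t`. -/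
def CondC3 (T α : ℝ) (μ σ : ℝ → ℝ → ℝ) : Prop :=
  (∃ M : ℝ, ∀ t ∈ Icc (0:ℝ) T, ∀ x : ℝ, |μ t x| ≤ M ∧ |σ t x| ≤ M) ∧
  (∀ t ∈ Icc (0:ℝ) T, ∀ x : ℝ,
    DifferentiableAt ℝ (μ t) x ∧ DifferentiableAt ℝ (σ t) x ∧
    DifferentiableAt ℝ (fun s => σ s x) t ∧ DifferentiableAt ℝ (deriv (σ t)) x ∧
    DifferentiableAt ℝ (fun y => pderivT σ t y) x) ∧
  HolderTX T α μ ∧ HolderTX T α (fun t x => pderivX μ t x) ∧ HolderTX T α σ ∧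
  HolderTX T α (fun t x => pderivT σ t x) ∧ HolderTX T α (fun t x => pderivX σ t x) ∧
  HolderTX T α (fun t x => pderivX (fun s y => pderivT σ s y) t x) ∧
  HolderTX T α (fun t x => pderivXX σ t x)

/-- `M` is a martingale with respect to `(F, P)` over the time set `I`. -/
def MartingaleOn [m : MeasurableSpace Ω] (P : Measure Ω) (F : Filtration ℝ m)
    (M : ℝ → Ω → ℝ) (I : Set ℝ) : Prop :=
  (∀ u ∈ I, StronglyMeasurable[F u] (M u) ∧ Integrable (M u) P) ∧
  ∀ u₁ ∈ I, ∀ u₂ ∈ I, u₁ ≤ u₂ → P[M u₂|F u₁] =ᵐ[P] M u₁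

/-- `X` solves the martingale problem for the generator associated with `μ` and `σ`:
for every compactly supported `f ∈ C^{1,2}`, the process
`u ↦ f(u, X^{s,x}_u) − ∫_s^u (Lf)(r, X^{s,x}_r) dr` is a martingale on `[s,T]`. -/
def SolvesMP [m : MeasurableSpace Ω] (T : ℝ) (μ σ : ℝ → ℝ → ℝ) (P : Measure Ω)
    (F : Filtration ℝ m) (X : ℝ → ℝ → ℝ → Ω → ℝ) : Prop :=
  ∀ s ∈ Icc (0:ℝ) T, ∀ x : ℝ, ∀ f : ℝ → ℝ → ℝ,
    C12On f univ → HasCompactSupport (fun p : ℝ × ℝ => f p.1 p.2) →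
    MartingaleOn P F
      (fun u ω => f u (X s x u ω) - ∫ r in s..u, genOp μ σ f r (X s x r ω)) (Icc s T)

/-- The first hitting time `τ^{s,x}` of the boundary `g`, capped at `T`. -/
def tauF (T : ℝ) (g : ℝ → ℝ) (X : ℝ → ℝ → ℝ → Ω → ℝ) (s x : ℝ) (ω : Ω) : ℝ :=
  sInf ({t | t ∈ Icc s T ∧ g t ≤ X s x t ω} ∪ {T})

/-- The boundary non-crossing probability `v(s,x)`. -/
def vF [MeasurableSpace Ω] (T : ℝ) (g : ℝ → ℝ) (P : Measure Ω)
    (X : ℝ → ℝ → ℝ → Ω → ℝ) (s x : ℝ) : ℝ :=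
  (P {ω | ∀ u ∈ Ico s T, X s x u ω < g u}).toReal

/-- The domain `D_t = {(s,x) : 0 < s < t, x < g(s)}`. -/
def DTset (t : ℝ) (g : ℝ → ℝ) : Set (ℝ × ℝ) := {p | 0 < p.1 ∧ p.1 < t ∧ p.2 < g p.1}

/-- The boundary non-crossing probability functional `F(b)`. -/
def FncF [MeasurableSpace Ω] (T x₀ : ℝ) (P : Measure Ω) (X : ℝ → ℝ → ℝ → Ω → ℝ)
    (b : ℝ → ℝ) : ℝ :=
  (P {ω | ∀ t ∈ Icc (0:ℝ) T, X 0 x₀ t ω < b t}).toReal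

/-- `h` lies in the Cameron–Martin space `H`, with a.e. derivative `ℓ ∈ L²([0,T])`. -/
def InCM (T : ℝ) (h ℓ : ℝ → ℝ) : Prop :=
  Measurable ℓ ∧ IntegrableOn (fun s => ℓ s ^ 2) (Icc 0 T) volume ∧
  ∀ t ∈ Icc (0:ℝ) T, h t = ∫ s in (0:ℝ)..t, ℓ s

/-- Membership in the Cameron–Martin space `H`. -/
def InH (T : ℝ) (h : ℝ → ℝ) : Prop := ∃ ℓ : ℝ → ℝ, InCM T h ℓ

/-- The function `ψ(t) = −E[∂ₓv(t, X_t) 1_{τ > t}]`. -/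
def psiF [MeasurableSpace Ω] (T x₀ : ℝ) (g : ℝ → ℝ) (P : Measure Ω)
    (X : ℝ → ℝ → ℝ → Ω → ℝ) (t : ℝ) : ℝ :=
  -∫ ω, (if t < tauF T g X 0 x₀ ω then pderivX (vF T g P X) t (X 0 x₀ t ω) else 0) ∂P

/-- `N_t = 𝔥(t∧τ, X_{t∧τ})/𝔥(0,x₀)` where `𝔥 = −∂ₓv`. -/
def NtF [MeasurableSpace Ω] (T x₀ : ℝ) (g : ℝ → ℝ) (P : Measure Ω)
    (X : ℝ → ℝ → ℝ → Ω → ℝ) (t : ℝ) (ω : Ω) : ℝ :=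
  -pderivX (vF T g P X) (min t (tauF T g X 0 x₀ ω)) (X 0 x₀ (min t (tauF T g X 0 x₀ ω)) ω) /
    -pderivX (vF T g P X) 0 x₀

/-! ### The Lamperti transform -/

/-- The generator `L` applied to a function with partial derivatives `ft = ∂ₜf`, `fx = ∂ₓf`,
`fxx = ∂ₓₓf`, these being given explicitly rather than through `deriv`. -/
def genOf (μ σ ft fx fxx : ℝ → ℝ → ℝ) (t x : ℝ) : ℝ :=
  ft t x + μ t x * fx t x + (1 / 2) * (σ t x) ^ 2 * fxx t x

/-- `Φ` is a Lamperti transform for the coefficients `μ`, `σ` on the open strip `(0,T) × ℝ`: it has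
the partial derivatives `Φt`, `Φx = 1/σ`, `Φxx`, all jointly continuous, it is expanding in space,
and the transformed drift is Lipschitz in space. Working on the open time interval avoids one-sided
time derivatives. -/
structure LampertiData (T M L : ℝ) (μ σ Φ Φt Φx Φxx : ℝ → ℝ → ℝ) : Prop where
  M_pos : 0 < M
  abs_mu_le : ∀ t ∈ Ioo 0 T, ∀ x, |μ t x| ≤ M
  abs_sigma_le : ∀ t ∈ Ioo 0 T, ∀ x, |σ t x| ≤ M
  sigma_mul : ∀ t ∈ Ioo 0 T, ∀ x, σ t x * Φx t x = 1
  hasDerivAt_t : ∀ t ∈ Ioo 0 T, ∀ x, HasDerivAt (fun r => Φ r x) (Φt t x) t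
  hasDerivAt_x : ∀ t ∈ Ioo 0 T, ∀ x, HasDerivAt (Φ t) (Φx t x) x
  hasDerivAt_xx : ∀ t ∈ Ioo 0 T, ∀ x, HasDerivAt (Φx t) (Φxx t x) x
  cont_mu : ContinuousOn (fun p : ℝ × ℝ => μ p.1 p.2) (Ioo 0 T ×ˢ univ)
  cont_sigma : ContinuousOn (fun p : ℝ × ℝ => σ p.1 p.2) (Ioo 0 T ×ˢ univ)
  cont : ContinuousOn (fun p : ℝ × ℝ => Φ p.1 p.2) (Ioo 0 T ×ˢ univ)
  cont_t : ContinuousOn (fun p : ℝ × ℝ => Φt p.1 p.2) (Ioo 0 T ×ˢ univ)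
  cont_x : ContinuousOn (fun p : ℝ × ℝ => Φx p.1 p.2) (Ioo 0 T ×ˢ univ)
  cont_xx : ContinuousOn (fun p : ℝ × ℝ => Φxx p.1 p.2) (Ioo 0 T ×ˢ univ)
  expand : ∀ t ∈ Ioo 0 T, ∀ x y, |x - y| ≤ M * |Φ t x - Φ t y|
  lip : ∀ t ∈ Ioo 0 T, ∀ x y,
    |genOf μ σ Φt Φx Φxx t x - genOf μ σ Φt Φx Φxx t y| ≤ L * |x - y|

/-- A bounded function whose derivative is Hölder continuous has a bounded derivative: by the mean
value theorem on `[x, x+1]` the derivative is small somewhere near `x`. -/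
lemma abs_deriv_le_of_holder {f f' : ℝ → ℝ} {M C α : ℝ} (hα : 0 < α)
    (hf : ∀ x, HasDerivAt f (f' x) x) (hM : ∀ x, |f x| ≤ M)
    (hC : ∀ x y, |f' x - f' y| ≤ C * |x - y| ^ α) (x : ℝ) : |f' x| ≤ 2 * M + |C| := by
  obtain ⟨ξ, hξ, h⟩ := exists_hasDerivAt_eq_slope f f' (show x < x + 1 by linarith)
    (fun y _ => (hf y).continuousAt.continuousWithinAt) (fun y _ => hf y)
  have h1 := hC x ξ
  have h2 : |x - ξ| ^ α ≤ 1 := by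
    apply Real.rpow_le_one (abs_nonneg _) _ hα.le
    rw [abs_le]; constructor <;> linarith [hξ.1, hξ.2]
  have h3 : C * |x - ξ| ^ α ≤ |C| := by
    calc C * |x - ξ| ^ α ≤ |C| * |x - ξ| ^ α := by gcongr; exact le_abs_self C
      _ ≤ |C| * 1 := by gcongr
      _ = |C| := mul_one _
  have h4 : f' ξ = f (x + 1) - f x := by rw [h]; ring_nf
  have h5 := hM x
  have h6 := hM (x + 1)
  rw [abs_le] at *
  constructor <;> linarith [h5.1, h5.2, h6.1, h6.2, h1.1, h1.2]

/-- On `[0,T]` the comparison point given by the mean value theorem is at distance at most `T`. -/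
lemma abs_deriv_time_le_of_holder {f f' : ℝ → ℝ} {T M C α : ℝ} (hT : 0 < T) (hα : 0 < α)
    (hf : ∀ t ∈ Icc 0 T, HasDerivAt f (f' t) t) (hM : ∀ t ∈ Icc 0 T, |f t| ≤ M)
    (hC : ∀ t ∈ Icc 0 T, ∀ r ∈ Icc 0 T, |f' t - f' r| ≤ C * |t - r| ^ α) :
    ∀ t ∈ Icc 0 T, |f' t| ≤ 2 * M / T + |C| * T ^ α := by
  intro t ht
  obtain ⟨ξ, hξ, h⟩ := exists_hasDerivAt_eq_slope f f' hT
    (fun y hy => (hf y hy).continuousAt.continuousWithinAt)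
    (fun y hy => hf y (Ioo_subset_Icc_self hy))
  have h1 := hC t ht ξ (Ioo_subset_Icc_self hξ)
  have h2 : |t - ξ| ^ α ≤ T ^ α := by
    apply Real.rpow_le_rpow (abs_nonneg _) _ hα.le
    rw [abs_le]; constructor <;> linarith [hξ.1, hξ.2, ht.1, ht.2]
  have h3 : C * |t - ξ| ^ α ≤ |C| * T ^ α := by
    calc C * |t - ξ| ^ α ≤ |C| * |t - ξ| ^ α := by gcongr; exact le_abs_self C
      _ ≤ |C| * T ^ α := by gcongr
  have h4 : |f' ξ| ≤ 2 * M / T := by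
    rw [h, sub_zero, abs_div, abs_of_pos hT]
    gcongr
    calc |f T - f 0| ≤ |f T| + |f 0| := abs_sub _ _
      _ ≤ 2 * M := by linarith [hM T ⟨hT.le, le_rfl⟩, hM 0 ⟨le_rfl, hT.le⟩]
  calc |f' t| = |(f' t - f' ξ) + f' ξ| := by ring_nf
    _ ≤ |f' t - f' ξ| + |f' ξ| := abs_add_le _ _
    _ ≤ _ := by linarith

lemma HolderTX.continuousOn {T α : ℝ} {φ : ℝ → ℝ → ℝ} (hα : 0 < α) (h : HolderTX T α φ) :
    ContinuousOn (fun p : ℝ × ℝ => φ p.1 p.2) (Icc 0 T ×ˢ univ) := by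
  obtain ⟨C, hC⟩ := h
  intro p hp
  have hp1 : p.1 ∈ Icc 0 T := hp.1
  rw [ContinuousWithinAt, tendsto_iff_dist_tendsto_zero]
  have hlim : Tendsto (fun q : ℝ × ℝ => C * (|q.2 - p.2| ^ α + |q.1 - p.1| ^ (α / 2)))
      (𝓝[Icc 0 T ×ˢ univ] p) (𝓝 0) := by
    have : Continuous (fun q : ℝ × ℝ => C * (|q.2 - p.2| ^ α + |q.1 - p.1| ^ (α / 2))) := by
      have h1 : Continuous (fun q : ℝ × ℝ => |q.2 - p.2| ^ α) :=
        Continuous.rpow_const (by fun_prop) (fun _ => Or.inr hα.le)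
      have h2 : Continuous (fun q : ℝ × ℝ => |q.1 - p.1| ^ (α / 2)) :=
        Continuous.rpow_const (by fun_prop) (fun _ => Or.inr (by positivity))
      fun_prop
    have h0 := (this.tendsto p).mono_left (nhdsWithin_le_nhds (s := Icc 0 T ×ˢ univ))
    simpa [Real.zero_rpow hα.ne', Real.zero_rpow (show α / 2 ≠ 0 by positivity)] using h0
  refine squeeze_zero' (Eventually.of_forall fun _ => dist_nonneg) ?_ hlim
  filter_upwards [self_mem_nhdsWithin] with q hq
  exact hC q.1 hq.1 p.1 hp1 q.2 p.2

/-- A function continuous on `[0,T] × ℝ` agrees there with a globally continuous function. -/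
lemma continuous_clamp {T : ℝ} (hT : 0 ≤ T) {φ : ℝ → ℝ → ℝ}
    (h : ContinuousOn (fun p : ℝ × ℝ => φ p.1 p.2) (Icc 0 T ×ˢ univ)) :
    Continuous (Function.uncurry fun t x => φ (projIcc 0 T hT t) x) := by
  have : Continuous (fun p : ℝ × ℝ => ((projIcc 0 T hT p.1 : ℝ), p.2)) := by fun_prop
  exact h.comp_continuous this (fun p => ⟨(projIcc 0 T hT p.1).2, mem_univ _⟩)

/-- Joint continuity on the strip of `(t, x) ↦ ∫₀ˣ φ(t, z) dz`. -/
lemma continuousOn_primitive_strip {T : ℝ} (hT : 0 ≤ T) {φ : ℝ → ℝ → ℝ}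
    (h : ContinuousOn (fun p : ℝ × ℝ => φ p.1 p.2) (Icc 0 T ×ˢ univ)) :
    ContinuousOn (fun p : ℝ × ℝ => ∫ z in (0:ℝ)..p.2, φ p.1 z) (Ioo 0 T ×ˢ univ) := by
  have h1 := continuous_clamp hT h
  have h2 : Continuous (fun p : ℝ × ℝ => ∫ z in (0:ℝ)..p.2, φ (projIcc 0 T hT p.1) z) := by
    refine intervalIntegral.continuous_parametric_intervalIntegral_of_continuous
      (f := fun (p : ℝ × ℝ) z => φ (projIcc 0 T hT p.1) z) ?_ continuous_snd
    exact h1.comp (show Continuous (fun q : (ℝ × ℝ) × ℝ => (q.1.1, q.2)) by fun_prop)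
  refine h2.continuousOn.congr ?_
  intro p hp
  simp only [projIcc_of_mem hT (Ioo_subset_Icc_self hp.1)]

/-- The transform is `Φ(t,x) = ∫₀ˣ dz / σ(t,z)`. Its drift `LΦ = Φt + μ/σ - ∂ₓσ/2` has a spatial
derivative that (C2) and (C3) bound, the derivatives of the coefficients being themselves bounded as
Hölder continuous derivatives of bounded functions. -/
theorem exists_lampertiData {T α : ℝ} (hT : 0 < T) (hα : α ∈ Ioo (0:ℝ) 1)
    {μ σ : ℝ → ℝ → ℝ} (hC1 : CondC1 T μ σ) (hC2 : CondC2 T σ) (hC3 : CondC3 T α μ σ) :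
    ∃ (M L : ℝ) (Φ Φt Φx Φxx : ℝ → ℝ → ℝ), LampertiData T M L μ σ Φ Φt Φx Φxx := by
  obtain ⟨cμ, cσ, -, -, -⟩ := hC1
  obtain ⟨σ₀, hσ₀, hσ⟩ := hC2
  obtain ⟨⟨M, hM⟩, hdiff, -, ⟨Cμ, hμx⟩, -, hσt, hσx, -, ⟨Cσ, hσxx⟩⟩ := hC3
  have hα0 := hα.1
  have cσt := hσt.continuousOn hα0
  have cσx := hσx.continuousOn hα0
  obtain ⟨Ct, hσt⟩ := hσt
  obtain ⟨Cx, hσx⟩ := hσx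
  have h0T : (0:ℝ) ∈ Icc 0 T := ⟨le_rfl, hT.le⟩
  have hMpos : 0 < M := hσ₀.trans_le ((hσ 0 h0T 0).trans ((le_abs_self _).trans (hM 0 h0T 0).2))
  have space : ∀ {φ : ℝ → ℝ → ℝ} {C : ℝ}, (∀ t ∈ Icc (0:ℝ) T, ∀ t' ∈ Icc (0:ℝ) T, ∀ x x' : ℝ,
      |φ t x - φ t' x'| ≤ C * (|x - x'| ^ α + |t - t'| ^ (α / 2))) → ∀ t ∈ Icc (0:ℝ) T,
      ∀ x y, |φ t x - φ t y| ≤ C * |x - y| ^ α := by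
    intro φ C h t ht x y
    simpa [Real.zero_rpow (show α / 2 ≠ 0 by positivity)] using h t ht t ht x y
  have bμx : ∀ t ∈ Icc (0:ℝ) T, ∀ x, |deriv (μ t) x| ≤ 2 * M + |Cμ| := fun t ht =>
    abs_deriv_le_of_holder hα0 (fun x => (hdiff t ht x).1.hasDerivAt) (fun x => (hM t ht x).1)
      (space hμx t ht)
  have bσx : ∀ t ∈ Icc (0:ℝ) T, ∀ x, |deriv (σ t) x| ≤ 2 * M + |Cx| := fun t ht =>
    abs_deriv_le_of_holder hα0 (fun x => (hdiff t ht x).2.1.hasDerivAt) (fun x => (hM t ht x).2)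
      (space hσx t ht)
  have bσxx : ∀ t ∈ Icc (0:ℝ) T, ∀ x, |deriv (deriv (σ t)) x| ≤ 2 * (2 * M + |Cx|) + |Cσ| :=
    fun t ht => abs_deriv_le_of_holder hα0 (fun x => (hdiff t ht x).2.2.2.1.hasDerivAt)
      (bσx t ht) (space hσxx t ht)
  have bσt : ∀ t ∈ Icc (0:ℝ) T, ∀ x, |pderivT σ t x| ≤ 2 * M / T + |Ct| * T ^ (α / 2) := by
    intro t ht x
    refine abs_deriv_time_le_of_holder (f := fun t => σ t x) hT (by positivity)
      (fun t ht => (hdiff t ht x).2.2.1.hasDerivAt) (fun t ht => (hM t ht x).2) ?_ t ht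
    intro t ht r hr
    simpa [Real.zero_rpow hα0.ne', pderivT] using hσt t ht r hr x x
  set Bμ := 2 * M + |Cμ|
  set Bx := 2 * M + |Cx|
  set Bxx := 2 * Bx + |Cσ|
  set Bt := 2 * M / T + |Ct| * T ^ (α / 2)
  have hBt : 0 ≤ Bt := by positivity
  have σpos : ∀ t ∈ Icc (0:ℝ) T, ∀ x, 0 < σ t x := fun t ht x => hσ₀.trans_le (hσ t ht x)
  have cinv : ContinuousOn (fun p : ℝ × ℝ => 1 / σ p.1 p.2) (Icc 0 T ×ˢ univ) :=
    continuousOn_const.div cσ (fun p hp => (σpos p.1 hp.1 p.2).ne')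
  have ct : ContinuousOn (fun p : ℝ × ℝ => -(pderivT σ p.1 p.2) / (σ p.1 p.2) ^ 2)
      (Icc 0 T ×ˢ univ) :=
    cσt.neg.div (cσ.pow 2) (fun p hp => by have := σpos p.1 hp.1 p.2; positivity)
  have hsub : Ioo 0 T ×ˢ (univ : Set ℝ) ⊆ Icc 0 T ×ˢ univ :=
    prod_mono Ioo_subset_Icc_self subset_rfl
  have slice : ∀ {φ : ℝ → ℝ → ℝ}, ContinuousOn (fun p : ℝ × ℝ => φ p.1 p.2) (Icc 0 T ×ˢ univ) →
      ∀ t ∈ Icc 0 T, Continuous (φ t) := fun h t ht =>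
    h.comp_continuous (show Continuous (fun x : ℝ => (t, x)) by fun_prop) (fun x => ⟨ht, mem_univ _⟩)
  have hbdt : ∀ t ∈ Icc (0:ℝ) T, ∀ x, |-(pderivT σ t x) / (σ t x) ^ 2| ≤ Bt / σ₀ ^ 2 := by
    intro t ht x
    have h1 := hσ t ht x
    rw [abs_div, abs_neg, abs_of_pos (pow_pos (σpos t ht x) 2)]
    gcongr
    exact bσt t ht x
  have dx : ∀ t ∈ Ioo 0 T, ∀ x,
      HasDerivAt (fun x => ∫ z in (0:ℝ)..x, 1 / σ t z) (1 / σ t x) x := fun t ht x =>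
    ((slice (φ := fun t z => 1 / σ t z) cinv t (Ioo_subset_Icc_self ht)).integral_hasStrictDerivAt 0 x).hasDerivAt
  have dtx : ∀ t ∈ Ioo 0 T, ∀ x,
      HasDerivAt (fun x => ∫ z in (0:ℝ)..x, -(pderivT σ t z) / (σ t z) ^ 2)
        (-(pderivT σ t x) / (σ t x) ^ 2) x := fun t ht x =>
    ((slice (φ := fun t z => -(pderivT σ t z) / (σ t z) ^ 2) ct t (Ioo_subset_Icc_self ht)).integral_hasStrictDerivAt 0 x).hasDerivAt
  refine ⟨M, Bt / σ₀ ^ 2 + (Bμ * M + M * Bx) / σ₀ ^ 2 + Bxx / 2,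
    fun t x => ∫ z in (0:ℝ)..x, 1 / σ t z,
    fun t x => ∫ z in (0:ℝ)..x, -(pderivT σ t z) / (σ t z) ^ 2,
    fun t x => 1 / σ t x, fun t x => -(deriv (σ t) x) / (σ t x) ^ 2, ?_⟩
  refine ⟨hMpos, fun t ht x => (hM t (Ioo_subset_Icc_self ht) x).1,
    fun t ht x => (hM t (Ioo_subset_Icc_self ht) x).2, ?_, ?_, dx, ?_, cμ.mono hsub, cσ.mono hsub,
    continuousOn_primitive_strip (φ := fun t z => 1 / σ t z) hT.le cinv,
    continuousOn_primitive_strip (φ := fun t z => -(pderivT σ t z) / (σ t z) ^ 2) hT.le ct,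
    cinv.mono hsub, ?_, ?_, ?_⟩
  · intro t ht x
    exact mul_one_div_cancel (σpos t (Ioo_subset_Icc_self ht) x).ne'
  · intro t ht x
    refine (intervalIntegral.hasDerivAt_integral_of_dominated_loc_of_deriv_le
      (F := fun t z => 1 / σ t z) (F' := fun t z => -(pderivT σ t z) / (σ t z) ^ 2)
      (bound := fun _ => Bt / σ₀ ^ 2) (s := Ioo 0 T)
      (isOpen_Ioo.mem_nhds ht) ?_ ?_ ?_ ?_ ?_ ?_).2
    · filter_upwards [isOpen_Ioo.mem_nhds ht] with r hr
      exact (slice (φ := fun t z => 1 / σ t z) cinv r (Ioo_subset_Icc_self hr)).aestronglyMeasurable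
    · exact (slice (φ := fun t z => 1 / σ t z) cinv t (Ioo_subset_Icc_self ht)).intervalIntegrable _ _
    · exact (slice (φ := fun t z => -(pderivT σ t z) / (σ t z) ^ 2) ct t (Ioo_subset_Icc_self ht)).aestronglyMeasurable
    · exact ae_of_all _ fun z _ r hr => hbdt r (Ioo_subset_Icc_self hr) z
    · exact intervalIntegrable_const
    · refine ae_of_all _ fun z _ r hr => ?_
      have hr' := Ioo_subset_Icc_self hr
      have := ((hdiff r hr' z).2.2.1.hasDerivAt).inv (σpos r hr' z).ne'
      simp only [pderivT, one_div]
      exact this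
  · intro t ht x
    have ht' := Ioo_subset_Icc_self ht
    have := ((hdiff t ht' x).2.1.hasDerivAt).inv (σpos t ht' x).ne'
    simp only [one_div]
    exact this
  · exact (cσx.neg.div (cσ.pow 2)
      (fun p hp => (pow_pos (σpos p.1 hp.1 p.2) 2).ne')).mono hsub
  · intro t ht
    have ht' := Ioo_subset_Icc_self ht
    have mono : Monotone (fun x => M * (∫ z in (0:ℝ)..x, 1 / σ t z) - x) := by
      refine monotone_of_hasDerivAt_nonneg (fun x => ((dx t ht x).const_mul M).sub (hasDerivAt_id x)) ?_
      intro x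
      have h1 := σpos t ht' x
      have h2 : σ t x ≤ M := (le_abs_self _).trans (hM t ht' x).2
      have : 1 ≤ M * (1 / σ t x) := by
        rw [mul_one_div, le_div_iff₀ h1]; linarith
      simpa using this
    have key : ∀ x y, y ≤ x → |x - y| ≤ M * |(∫ z in (0:ℝ)..x, 1 / σ t z) -
        ∫ z in (0:ℝ)..y, 1 / σ t z| := by
      intro x y hxy
      have h1 := mono hxy
      simp only at h1
      have h2 := mul_le_mul_of_nonneg_left (le_abs_self ((∫ z in (0:ℝ)..x, 1 / σ t z) -
        ∫ z in (0:ℝ)..y, 1 / σ t z)) hMpos.le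
      rw [abs_of_nonneg (sub_nonneg.2 hxy)]
      linarith
    intro x y
    rcases le_total y x with h | h
    · exact key x y h
    · rw [abs_sub_comm, abs_sub_comm (∫ z in (0:ℝ)..x, 1 / σ t z)]
      exact key y x h
  · intro t ht x y
    have ht' := Ioo_subset_Icc_self ht
    have hd : ∀ x ∈ (univ : Set ℝ), HasDerivWithinAt (genOf μ σ
        (fun t x => ∫ z in (0:ℝ)..x, -(pderivT σ t z) / (σ t z) ^ 2)
        (fun t x => 1 / σ t x) (fun t x => -(deriv (σ t) x) / (σ t x) ^ 2) t)
        (-(pderivT σ t x) / (σ t x) ^ 2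
          + (deriv (μ t) x * σ t x - μ t x * deriv (σ t) x) / (σ t x) ^ 2
          + -(deriv (deriv (σ t)) x) / 2) univ x := by
      intro x _
      have e : genOf μ σ (fun t x => ∫ z in (0:ℝ)..x, -(pderivT σ t z) / (σ t z) ^ 2)
          (fun t x => 1 / σ t x) (fun t x => -(deriv (σ t) x) / (σ t x) ^ 2) t
          = fun x => (∫ z in (0:ℝ)..x, -(pderivT σ t z) / (σ t z) ^ 2) + μ t x / σ t x
            + -(deriv (σ t) x) / 2 := by
        funext x
        have := (σpos t ht' x).ne'
        simp only [genOf]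
        field_simp
      rw [e]
      obtain ⟨d1, d2, -, d3, -⟩ := hdiff t ht' x
      exact (((dtx t ht x).add (d1.hasDerivAt.div d2.hasDerivAt (σpos t ht' x).ne')).add
        (d3.hasDerivAt.neg.div_const 2)).hasDerivWithinAt
    have := Convex.norm_image_sub_le_of_norm_hasDerivWithin_le (C := Bt / σ₀ ^ 2 +
      (Bμ * M + M * Bx) / σ₀ ^ 2 + Bxx / 2) hd ?_ convex_univ (mem_univ y) (mem_univ x)
    · simpa [Real.norm_eq_abs] using this
    · intro x _
      rw [Real.norm_eq_abs]
      refine (abs_add_le _ _).trans (add_le_add ((abs_add_le _ _).trans (add_le_add (hbdt t ht' x) ?_)) ?_)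
      · have h1 := hσ t ht' x
        rw [abs_div, abs_of_pos (pow_pos (σpos t ht' x) 2)]
        gcongr
        refine (abs_sub _ _).trans (add_le_add ?_ ?_)
        · rw [abs_mul]
          exact mul_le_mul (bμx t ht' x) (hM t ht' x).2 (abs_nonneg _) (by positivity)
        · rw [abs_mul]
          exact mul_le_mul (hM t ht' x).1 (bσx t ht' x) (abs_nonneg _) hMpos.le
      · rw [abs_div, abs_neg, abs_two]
        gcongr
        exact bσxx t ht' x

/-! ### The martingale problem on the open strip -/

/-- `f` is `C^{1,2}` on the strip `(0,T) × ℝ` with partial derivatives `ft`, `fx`, `fxx`, and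
vanishes there outside `|x| ≤ R`. -/
structure StripTest (T R : ℝ) (f ft fx fxx : ℝ → ℝ → ℝ) : Prop where
  hasDerivAt_t : ∀ t ∈ Ioo 0 T, ∀ x, HasDerivAt (fun r => f r x) (ft t x) t
  hasDerivAt_x : ∀ t ∈ Ioo 0 T, ∀ x, HasDerivAt (f t) (fx t x) x
  hasDerivAt_xx : ∀ t ∈ Ioo 0 T, ∀ x, HasDerivAt (fx t) (fxx t x) x
  cont : ContinuousOn (fun p : ℝ × ℝ => f p.1 p.2) (Ioo 0 T ×ˢ univ)
  cont_t : ContinuousOn (fun p : ℝ × ℝ => ft p.1 p.2) (Ioo 0 T ×ˢ univ)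
  cont_x : ContinuousOn (fun p : ℝ × ℝ => fx p.1 p.2) (Ioo 0 T ×ˢ univ)
  cont_xx : ContinuousOn (fun p : ℝ × ℝ => fxx p.1 p.2) (Ioo 0 T ×ˢ univ)
  supp : ∀ t ∈ Ioo 0 T, ∀ x, R < |x| → f t x = 0

/-- A time cutoff equal to `1` near `[s, b]` and supported in `(0, T)`, where the test functions of the
martingale problem have two-sided time derivatives. -/
lemma exists_time_cutoff {T s b : ℝ} (hs : 0 < s) (hsb : s ≤ b) (hb : b < T) :
    ∃ θ : ℝ → ℝ, ContDiff ℝ 1 θ ∧ IsCompact (tsupport θ) ∧ tsupport θ ⊆ Ioo 0 T ∧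
      ∀ r ∈ Icc s b, θ =ᶠ[𝓝 r] 1 := by
  obtain ⟨d, hd0, hd1, hd2, hd3⟩ : ∃ d : ℝ, 0 ≤ d ∧ d < T / 2 ∧ T / 2 - d ≤ s ∧ b ≤ T / 2 + d := by
    refine ⟨max |s - T / 2| |b - T / 2|, by positivity, ?_, ?_, ?_⟩
    · rw [max_lt_iff, abs_lt, abs_lt]; refine ⟨⟨?_, ?_⟩, ⟨?_, ?_⟩⟩ <;> linarith
    · have := (neg_abs_le (s - T / 2)); have := le_max_left |s - T / 2| |b - T / 2|; linarith
    · have := (le_abs_self (b - T / 2)); have := le_max_right |s - T / 2| |b - T / 2|; linarith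
  let φ : ContDiffBump (T / 2 : ℝ) := ⟨(d + T / 2) / 2, (d + T / 2) / 4 + T / 4, by linarith, by linarith⟩
  refine ⟨φ, φ.contDiff, φ.hasCompactSupport, ?_, ?_⟩
  · rw [φ.tsupport_eq, Real.closedBall_eq_Icc]
    intro r hr
    have h1 : T / 2 - ((d + T / 2) / 4 + T / 4) ≤ r := hr.1
    have h2 : r ≤ T / 2 + ((d + T / 2) / 4 + T / 4) := hr.2
    constructor <;> linarith
  · intro r hr
    refine φ.eventuallyEq_one_of_mem_ball ?_
    rw [Real.ball_eq_Ioo]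
    change r ∈ Ioo (T / 2 - (d + T / 2) / 2) (T / 2 + (d + T / 2) / 2)
    constructor <;> linarith [hr.1, hr.2]

/-- A time cutoff supported in `(0,T)` extends a function continuous on the strip by zero. -/
lemma continuous_cutoff_mul {T : ℝ} {ψ : ℝ → ℝ} {k : ℝ → ℝ → ℝ} (hψ : Continuous ψ)
    (hs : tsupport ψ ⊆ Ioo 0 T)
    (hk : ContinuousOn (fun p : ℝ × ℝ => k p.1 p.2) (Ioo 0 T ×ˢ univ)) :
    Continuous (fun p : ℝ × ℝ => ψ p.1 * k p.1 p.2) := by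
  rw [continuous_iff_continuousAt]
  intro p
  by_cases hp : p.1 ∈ Ioo 0 T
  · have h1 : ContinuousAt (fun p : ℝ × ℝ => k p.1 p.2) p :=
      hk.continuousAt ((isOpen_Ioo.prod isOpen_univ).mem_nhds ⟨hp, mem_univ _⟩)
    exact (hψ.comp continuous_fst).continuousAt.mul h1
  · have h0 : p.1 ∉ tsupport ψ := fun h => hp (hs h)
    have h1 : ψ =ᶠ[𝓝 p.1] 0 := notMem_tsupport_iff_eventuallyEq.1 h0
    have h2 : (fun p : ℝ × ℝ => ψ p.1 * k p.1 p.2) =ᶠ[𝓝 p] fun _ => 0 := by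
      filter_upwards [continuous_fst.continuousAt.eventually h1] with q hq
      simp [hq]
    exact continuousAt_const.congr h2.symm

section cutoff

variable {T R : ℝ} {f ft fx fxx : ℝ → ℝ → ℝ} {θ : ℝ → ℝ}

lemma StripTest.pderivT_cutoff (h : StripTest T R f ft fx fxx) (hθ : ContDiff ℝ 1 θ)
    (hs : tsupport θ ⊆ Ioo 0 T) (t x : ℝ) :
    HasDerivAt (fun r => θ r * f r x) (deriv θ t * f t x + θ t * ft t x) t := by
  by_cases ht : t ∈ Ioo 0 T
  · exact ((hθ.differentiable one_ne_zero) t).hasDerivAt.mul (h.hasDerivAt_t t ht x)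
  · have h1 : θ =ᶠ[𝓝 t] 0 := notMem_tsupport_iff_eventuallyEq.1 (fun h' => ht (hs h'))
    have h2 : deriv θ t = 0 := by rw [h1.deriv_eq]; simp
    have h3 : (fun r => θ r * f r x) =ᶠ[𝓝 t] fun _ => 0 := by
      filter_upwards [h1] with r hr; simp [hr]
    rw [h2, h1.self_of_nhds]
    simpa using (hasDerivAt_const t (0:ℝ)).congr_of_eventuallyEq h3

lemma StripTest.pderivX_cutoff (h : StripTest T R f ft fx fxx)
    (hs : tsupport θ ⊆ Ioo 0 T) (t x : ℝ) :
    HasDerivAt (fun y => θ t * f t y) (θ t * fx t x) x := by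
  by_cases ht : t ∈ Ioo 0 T
  · exact (h.hasDerivAt_x t ht x).const_mul _
  · have h1 : θ t = 0 := image_eq_zero_of_notMem_tsupport (fun h' => ht (hs h'))
    simpa [h1] using hasDerivAt_const x (0:ℝ)

lemma StripTest.pderivXX_cutoff (h : StripTest T R f ft fx fxx)
    (hs : tsupport θ ⊆ Ioo 0 T) (t x : ℝ) :
    HasDerivAt (fun y => θ t * fx t y) (θ t * fxx t x) x := by
  by_cases ht : t ∈ Ioo 0 T
  · exact (h.hasDerivAt_xx t ht x).const_mul _
  · have h1 : θ t = 0 := image_eq_zero_of_notMem_tsupport (fun h' => ht (hs h'))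
    simpa [h1] using hasDerivAt_const x (0:ℝ)

lemma StripTest.deriv_cutoff (h : StripTest T R f ft fx fxx)
    (hs : tsupport θ ⊆ Ioo 0 T) (t : ℝ) :
    deriv (fun y => θ t * f t y) = fun y => θ t * fx t y :=
  funext fun y => (h.pderivX_cutoff hs t y).deriv

lemma StripTest.c12On_cutoff (h : StripTest T R f ft fx fxx) (hθ : ContDiff ℝ 1 θ)
    (hs : tsupport θ ⊆ Ioo 0 T) : C12On (fun t x => θ t * f t x) univ := by
  refine ⟨fun p _ => (h.pderivT_cutoff hθ hs p.1 p.2).differentiableAt,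
    fun p _ => (h.pderivX_cutoff hs p.1 p.2).differentiableAt, fun p _ => ?_, ?_, ?_, ?_⟩
  · rw [h.deriv_cutoff hs]
    exact (h.pderivXX_cutoff hs p.1 p.2).differentiableAt
  · have e : (fun p : ℝ × ℝ => pderivT (fun t x => θ t * f t x) p.1 p.2)
        = fun p => deriv θ p.1 * f p.1 p.2 + θ p.1 * ft p.1 p.2 :=
      funext fun p => (h.pderivT_cutoff hθ hs p.1 p.2).deriv
    rw [e, continuousOn_univ]
    exact (continuous_cutoff_mul (hθ.continuous_deriv le_rfl)
      ((tsupport_deriv_subset).trans hs) h.cont).add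
      (continuous_cutoff_mul hθ.continuous hs h.cont_t)
  · have e : (fun p : ℝ × ℝ => pderivX (fun t x => θ t * f t x) p.1 p.2)
        = fun p => θ p.1 * fx p.1 p.2 :=
      funext fun p => (h.pderivX_cutoff hs p.1 p.2).deriv
    rw [e, continuousOn_univ]
    exact continuous_cutoff_mul hθ.continuous hs h.cont_x
  · have e : (fun p : ℝ × ℝ => pderivXX (fun t x => θ t * f t x) p.1 p.2)
        = fun p => θ p.1 * fxx p.1 p.2 := by
      funext p
      simp only [pderivXX, h.deriv_cutoff hs]
      exact (h.pderivXX_cutoff hs p.1 p.2).deriv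
    rw [e, continuousOn_univ]
    exact continuous_cutoff_mul hθ.continuous hs h.cont_xx

lemma StripTest.hasCompactSupport_cutoff (h : StripTest T R f ft fx fxx)
    (hc : IsCompact (tsupport θ)) (hs : tsupport θ ⊆ Ioo 0 T) :
    HasCompactSupport (fun p : ℝ × ℝ => θ p.1 * f p.1 p.2) := by
  refine HasCompactSupport.intro (hc.prod (isCompact_Icc (a := -R) (b := R))) ?_
  intro p hp
  by_cases h1 : p.1 ∈ tsupport θ
  · have h2 : R < |p.2| := by
      by_contra h3
      exact hp ⟨h1, abs_le.1 (not_lt.1 h3)⟩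
    simp [h.supp p.1 (hs h1) p.2 h2]
  · simp [image_eq_zero_of_notMem_tsupport h1]

lemma StripTest.genOp_cutoff (h : StripTest T R f ft fx fxx) (hθ : ContDiff ℝ 1 θ)
    (hs : tsupport θ ⊆ Ioo 0 T) (μ σ : ℝ → ℝ → ℝ) {t : ℝ} (ht : θ =ᶠ[𝓝 t] 1) (x : ℝ) :
    genOp μ σ (fun t x => θ t * f t x) t x = genOf μ σ ft fx fxx t x := by
  have h0 : θ t = 1 := ht.self_of_nhds
  have h1 : deriv θ t = 0 := by rw [ht.deriv_eq]; simp
  have e1 : pderivT (fun t x => θ t * f t x) t x = ft t x := by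
    have := (h.pderivT_cutoff hθ hs t x).deriv
    simpa [pderivT, h0, h1] using this
  have e2 : pderivX (fun t x => θ t * f t x) t x = fx t x := by
    have := (h.pderivX_cutoff hs t x).deriv
    simpa only [pderivX, h0, one_mul] using this
  have e3 : pderivXX (fun t x => θ t * f t x) t x = fxx t x := by
    change deriv (deriv (fun y => θ t * f t y)) x = _
    rw [h.deriv_cutoff hs, (h.pderivXX_cutoff hs t x).deriv, h0, one_mul]
  simp only [genOp, genOf, e1, e2, e3]

end cutoff

/-- The martingale problem for a single process `ξ` started at time `s`. -/
def MPAt [m : MeasurableSpace Ω] (T : ℝ) (μ σ : ℝ → ℝ → ℝ) (P : Measure Ω)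
    (F : Filtration ℝ m) (s : ℝ) (ξ : ℝ → Ω → ℝ) : Prop :=
  ∀ f : ℝ → ℝ → ℝ, C12On f univ → HasCompactSupport (fun p : ℝ × ℝ => f p.1 p.2) →
    MartingaleOn P F (fun u ω => f u (ξ u ω) - ∫ r in s..u, genOp μ σ f r (ξ r ω)) (Icc s T)

lemma continuousOn_along {T s b : ℝ} (hs : 0 < s) (hb : b < T) {k : ℝ → ℝ → ℝ}
    (hk : ContinuousOn (fun p : ℝ × ℝ => k p.1 p.2) (Ioo 0 T ×ˢ univ)) {y : ℝ → ℝ}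
    (hy : ContinuousOn y (Icc s b)) : ContinuousOn (fun r => k r (y r)) (Icc s b) :=
  hk.comp (continuousOn_id.prodMk hy) (fun _ hr => ⟨⟨hs.trans_le hr.1, hr.2.trans_lt hb⟩, mem_univ _⟩)

lemma continuousOn_genOf {T : ℝ} {μ σ ft fx fxx : ℝ → ℝ → ℝ}
    (hμ : ContinuousOn (fun p : ℝ × ℝ => μ p.1 p.2) (Ioo 0 T ×ˢ univ))
    (hσ : ContinuousOn (fun p : ℝ × ℝ => σ p.1 p.2) (Ioo 0 T ×ˢ univ))
    (ht : ContinuousOn (fun p : ℝ × ℝ => ft p.1 p.2) (Ioo 0 T ×ˢ univ))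
    (hx : ContinuousOn (fun p : ℝ × ℝ => fx p.1 p.2) (Ioo 0 T ×ˢ univ))
    (hxx : ContinuousOn (fun p : ℝ × ℝ => fxx p.1 p.2) (Ioo 0 T ×ˢ univ)) :
    ContinuousOn (fun p : ℝ × ℝ => genOf μ σ ft fx fxx p.1 p.2) (Ioo 0 T ×ˢ univ) :=
  (ht.add (hμ.mul hx)).add ((continuousOn_const.mul (hσ.pow 2)).mul hxx)

/-- The martingale property, tested against bounded `𝔉_a`-measurable `Z`, for test functions on the
open strip. -/
lemma MPAt.integral_eq_zero [m : MeasurableSpace Ω] {P : Measure Ω} [IsProbabilityMeasure P]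
    {F : Filtration ℝ m} {T s R : ℝ} {μ σ : ℝ → ℝ → ℝ} {ξ : ℝ → Ω → ℝ} (hs : 0 < s)
    (hμ : ContinuousOn (fun p : ℝ × ℝ => μ p.1 p.2) (Ioo 0 T ×ˢ univ))
    (hσ : ContinuousOn (fun p : ℝ × ℝ => σ p.1 p.2) (Ioo 0 T ×ˢ univ))
    (hξ : ∀ ω, ContinuousOn (fun u => ξ u ω) (Icc s T)) (hmp : MPAt T μ σ P F s ξ)
    {f ft fx fxx : ℝ → ℝ → ℝ} (hf : StripTest T R f ft fx fxx)
    {a b : ℝ} (hsa : s ≤ a) (hab : a ≤ b) (hb : b < T)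
    {Z : Ω → ℝ} (hZ : Measurable[F a] Z) {C : ℝ} (hZC : ∀ ω, |Z ω| ≤ C) :
    ∫ ω, Z ω * (f b (ξ b ω) - f a (ξ a ω) - ∫ r in a..b, genOf μ σ ft fx fxx r (ξ r ω)) ∂P = 0 := by
  obtain ⟨θ, hθ, hθc, hθs, hθ1⟩ := exists_time_cutoff hs (hsa.trans hab) hb
  obtain ⟨hM1, hM2⟩ := hmp _ (hf.c12On_cutoff hθ hθs) (hf.hasCompactSupport_cutoff hθc hθs)
  have haI : a ∈ Icc s T := ⟨hsa, hab.trans hb.le⟩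
  have hbI : b ∈ Icc s T := ⟨hsa.trans hab, hb.le⟩
  have hce := hM2 a haI b hbI hab
  obtain ⟨-, hMa⟩ := hM1 a haI
  obtain ⟨-, hMb⟩ := hM1 b hbI
  set Mb := fun ω => θ b * f b (ξ b ω) - ∫ r in s..b, genOp μ σ (fun t x => θ t * f t x) r (ξ r ω)
  set Ma := fun ω => θ a * f a (ξ a ω) - ∫ r in s..a, genOp μ σ (fun t x => θ t * f t x) r (ξ r ω)
  have key : ∀ ω, f b (ξ b ω) - f a (ξ a ω) - ∫ r in a..b, genOf μ σ ft fx fxx r (ξ r ω)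
      = Mb ω - Ma ω := by
    intro ω
    have hcont := continuousOn_along hs hb
      (continuousOn_genOf hμ hσ hf.cont_t hf.cont_x hf.cont_xx)
      ((hξ ω).mono (Icc_subset_Icc_right hb.le))
    have hg : ∀ c d, c ≤ d → s ≤ c → d ≤ b →
        ∫ r in c..d, genOp μ σ (fun t x => θ t * f t x) r (ξ r ω)
          = ∫ r in c..d, genOf μ σ ft fx fxx r (ξ r ω) := by
      intro c d hcd hsc hdb
      refine intervalIntegral.integral_congr fun r hr => ?_
      rw [uIcc_of_le hcd] at hr
      exact hf.genOp_cutoff hθ hθs μ σ (hθ1 r ⟨hsc.trans hr.1, hr.2.trans hdb⟩) _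
    have e1 : θ b = 1 := (hθ1 b ⟨hsa.trans hab, le_rfl⟩).self_of_nhds
    have e2 : θ a = 1 := (hθ1 a ⟨hsa, hab⟩).self_of_nhds
    simp only [Mb, Ma, e1, e2, one_mul]
    rw [hg s b (hsa.trans hab) le_rfl le_rfl, hg s a hsa le_rfl hab,
      ← intervalIntegral.integral_add_adjacent_intervals (a := s) (b := a) (c := b)]
    · ring
    · exact (hcont.mono (Icc_subset_Icc_right hab)).intervalIntegrable_of_Icc hsa
    · exact (hcont.mono (Icc_subset_Icc_left hsa)).intervalIntegrable_of_Icc hab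
  simp_rw [key, mul_sub]
  have hZm : StronglyMeasurable[F a] Z := hZ.stronglyMeasurable
  have hZm' : AEStronglyMeasurable Z P := (hZm.mono (F.le a)).aestronglyMeasurable
  have hZb : ∀ᵐ ω ∂P, ‖Z ω‖ ≤ C := ae_of_all _ hZC
  have i1 : Integrable (fun ω => Z ω * Mb ω) P := hMb.bdd_mul hZm' hZb
  have i2 : Integrable (fun ω => Z ω * Ma ω) P := hMa.bdd_mul hZm' hZb
  rw [integral_sub i1 i2, sub_eq_zero]
  have h1 := condExp_stronglyMeasurable_mul_of_bound (F.le a) hZm hMb C hZb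
  calc ∫ ω, Z ω * Mb ω ∂P = ∫ ω, (P[Z * Mb | F a]) ω ∂P := (integral_condExp (F.le a)).symm
    _ = ∫ ω, Z ω * Ma ω ∂P := by
        refine integral_congr_ae ?_
        filter_upwards [h1, hce] with ω h1 h2
        rw [h1, Pi.mul_apply, h2]

/-! ### A product rule for martingales and finite variation processes -/

lemma measurable_integral_of_continuous [MeasurableSpace Ω] {H : ℝ → Ω → ℝ}
    (hc : ∀ ω, Continuous fun r => H r ω) (hm : ∀ r, Measurable (H r)) (c d : ℝ) :
    Measurable fun ω => ∫ r in c..d, H r ω := by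
  have h1 : StronglyMeasurable (Function.uncurry H) :=
    stronglyMeasurable_uncurry_of_continuous_of_stronglyMeasurable hc
      (fun r => (hm r).stronglyMeasurable)
  have h2 : StronglyMeasurable (fun p : Ω × ℝ => H p.2 p.1) := h1.comp_measurable measurable_swap
  simp only [intervalIntegral]
  exact (h2.integral_prod_right' (ν := volume.restrict (Ioc c d))).measurable.sub
    (h2.integral_prod_right' (ν := volume.restrict (Ioc d c))).measurable

/-- If `G - ∫ H` is a martingale and `V` has the bounded adapted derivative `V'`, then
`G V - ∫ (V' G + V H)` is a martingale. -/
lemma product_rule [m : MeasurableSpace Ω] {P : Measure Ω} [IsProbabilityMeasure P]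
    {F : Filtration ℝ m} {a b : ℝ} (hab : a ≤ b) {G H V V' : ℝ → Ω → ℝ}
    (hGc : ∀ ω, Continuous fun r => G r ω) (hHc : ∀ ω, Continuous fun r => H r ω)
    (hVc : ∀ ω, Continuous fun r => V' r ω)
    (hV : ∀ ω r, HasDerivAt (fun r => V r ω) (V' r ω) r)
    (hGm : ∀ r, Measurable (G r)) (hHm : ∀ r, Measurable (H r)) (hVm : ∀ r, Measurable (V' r))
    (hVa : Measurable[F a] (V a)) (hVad : ∀ r ∈ Icc a b, Measurable[F r] (V' r))
    {C : ℝ} (hGC : ∀ r ∈ Icc a b, ∀ ω, |G r ω| ≤ C) (hHC : ∀ r ∈ Icc a b, ∀ ω, |H r ω| ≤ C)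
    (hVaC : ∀ ω, |V a ω| ≤ C) (hVC : ∀ r ∈ Icc a b, ∀ ω, |V' r ω| ≤ C)
    (hmart : ∀ r ∈ Icc a b, ∀ ζ : Ω → ℝ, Measurable[F r] ζ → (∃ K, ∀ ω, |ζ ω| ≤ K) →
      ∫ ω, ζ ω * (G b ω - G r ω - ∫ q in r..b, H q ω) ∂P = 0)
    {Z : Ω → ℝ} (hZ : Measurable[F a] Z) {K : ℝ} (hZK : ∀ ω, |Z ω| ≤ K) :
    Integrable (fun ω => Z ω * (G b ω * V b ω - G a ω * V a ω
      - ∫ r in a..b, (V' r ω * G r ω + V r ω * H r ω))) P ∧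
    ∫ ω, Z ω * (G b ω * V b ω - G a ω * V a ω - ∫ r in a..b, (V' r ω * G r ω + V r ω * H r ω)) ∂P
      = 0 := by
  have haI : a ∈ Icc a b := ⟨le_rfl, hab⟩
  have hbI : b ∈ Icc a b := ⟨hab, le_rfl⟩
  obtain ⟨ω₀⟩ : Nonempty Ω := by
    by_contra h
    rw [not_nonempty_iff] at h
    have := measure_univ (μ := P)
    simp [eq_empty_of_isEmpty (univ : Set Ω)] at this
  have hC0 : 0 ≤ C := (abs_nonneg _).trans (hVaC ω₀)
  have hK0 : 0 ≤ K := (abs_nonneg _).trans (hZK ω₀)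
  set D : ℝ → Ω → ℝ := fun r ω => G b ω - G r ω - ∫ q in r..b, H q ω with hD
  have hVcont : ∀ ω, Continuous fun r => V r ω := fun ω =>
    continuous_iff_continuousAt.2 fun r => (hV ω r).continuousAt
  have hKd : ∀ ω r, HasDerivAt (fun r => ∫ q in r..b, H q ω) (-(H r ω)) r := fun ω r =>
    intervalIntegral.integral_hasDerivAt_left ((hHc ω).intervalIntegrable _ _)
      ((hHc ω).stronglyMeasurableAtFilter _ _) (hHc ω).continuousAt
  have hKc : ∀ ω, Continuous fun r => ∫ q in r..b, H q ω := fun ω =>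
    continuous_iff_continuousAt.2 fun r => (hKd ω r).continuousAt
  have hDc : ∀ ω, Continuous fun r => D r ω := fun ω =>
    (continuous_const.sub (hGc ω)).sub (hKc ω)
  have hDm : ∀ r, Measurable (D r) := fun r =>
    ((hGm b).sub (hGm r)).sub (measurable_integral_of_continuous hHc hHm r b)
  have hDC : ∀ r ∈ Icc a b, ∀ ω, |D r ω| ≤ C + C + C * (b - a) := by
    intro r hr ω
    refine (abs_sub _ _).trans (add_le_add ((abs_sub _ _).trans
      (add_le_add (hGC b hbI ω) (hGC r hr ω))) ?_)
    have h1 := intervalIntegral.norm_integral_le_of_norm_le_const (a := r) (b := b) (C := C)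
      (f := fun q => H q ω) (fun q hq => by
        rw [uIoc_of_le hr.2] at hq
        exact hHC q ⟨hr.1.trans hq.1.le, hq.2⟩ ω)
    rw [Real.norm_eq_abs, abs_of_nonneg (sub_nonneg.2 hr.2)] at h1
    exact h1.trans (by gcongr; exact hr.1)
  -- integration by parts along each path
  have path : ∀ ω, G b ω * V b ω - G a ω * V a ω
      - ∫ r in a..b, (V' r ω * G r ω + V r ω * H r ω)
      = V a ω * D a ω + ∫ r in a..b, V' r ω * D r ω := by
    intro ω
    have ibp := intervalIntegral.integral_mul_deriv_eq_deriv_mul (a := a) (b := b)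
      (fun r _ => hKd ω r) (fun r _ => hV ω r)
      ((hHc ω).neg.intervalIntegrable _ _) ((hVc ω).intervalIntegrable _ _)
    have ftc := intervalIntegral.integral_eq_sub_of_hasDerivAt (a := a) (b := b)
      (fun r _ => hV ω r) ((hVc ω).intervalIntegrable _ _)
    have e1 : ∫ r in a..b, (V' r ω * G r ω + V r ω * H r ω)
        = (∫ r in a..b, V' r ω * G r ω) + ∫ r in a..b, V r ω * H r ω :=
      intervalIntegral.integral_add (((hVc ω).mul (hGc ω)).intervalIntegrable _ _)
        (((hVcont ω).mul (hHc ω)).intervalIntegrable _ _)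
    have e2 : ∫ r in a..b, V' r ω * D r ω = (V b ω - V a ω) * G b ω - (∫ r in a..b, V' r ω * G r ω)
        - ∫ r in a..b, (∫ q in r..b, H q ω) * V' r ω := by
      rw [← ftc, ← intervalIntegral.integral_mul_const, ← intervalIntegral.integral_sub,
        ← intervalIntegral.integral_sub]
      · refine intervalIntegral.integral_congr fun r _ => ?_
        simp only [hD]; ring
      · exact (((hVc ω).mul continuous_const).sub ((hVc ω).mul (hGc ω))).intervalIntegrable _ _
      · exact ((hKc ω).mul (hVc ω)).intervalIntegrable _ _
      · exact ((hVc ω).mul continuous_const).intervalIntegrable _ _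
      · exact ((hVc ω).mul (hGc ω)).intervalIntegrable _ _
    have e3 : ∫ r in a..b, -(H r ω) * V r ω = -∫ r in a..b, V r ω * H r ω := by
      rw [← intervalIntegral.integral_neg]
      refine intervalIntegral.integral_congr fun r _ => ?_
      ring
    rw [e3, intervalIntegral.integral_same] at ibp
    rw [e1, e2, ibp]
    simp only [hD]
    ring
  have hVaD : ∫ ω, Z ω * V a ω * D a ω ∂P = 0 :=
    hmart a haI (fun ω => Z ω * V a ω) (hZ.mul hVa) ⟨K * C, fun ω => by
      rw [abs_mul]; exact mul_le_mul (hZK ω) (hVaC ω) (abs_nonneg _) hK0⟩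
  have hZm : Measurable Z := hZ.mono (F.le a) le_rfl
  have hint : Integrable (Function.uncurry fun ω r => Z ω * V' r ω * D r ω)
      (P.prod (volume.restrict (Ioc a b))) := by
    have m1 : Measurable (Function.uncurry V') :=
      measurable_uncurry_of_continuous_of_measurable hVc hVm
    have m2 : Measurable (Function.uncurry D) :=
      measurable_uncurry_of_continuous_of_measurable hDc hDm
    have m3 : Measurable (Function.uncurry fun ω r => Z ω * V' r ω * D r ω) :=
      ((hZm.comp measurable_fst).mul (m1.comp measurable_swap)).mul (m2.comp measurable_swap)
    refine Integrable.of_bound m3.aestronglyMeasurable (K * C * (C + C + C * (b - a))) ?_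
    have h1 : ∀ᵐ p ∂(P.prod (volume.restrict (Ioc a b))), p.2 ∈ Ioc a b :=
      Measure.quasiMeasurePreserving_snd.ae (ae_restrict_mem measurableSet_Ioc)
    filter_upwards [h1] with p hp
    have hp' := Ioc_subset_Icc_self hp
    simp only [Function.uncurry, Real.norm_eq_abs, abs_mul]
    exact mul_le_mul (mul_le_mul (hZK _) (hVC _ hp' _) (abs_nonneg _) hK0) (hDC _ hp' _)
      (abs_nonneg _) (by positivity)
  have hswap : ∫ ω, (∫ r in a..b, Z ω * V' r ω * D r ω) ∂P = 0 := by
    simp only [intervalIntegral.integral_of_le hab]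
    rw [integral_integral_swap hint]
    refine (setIntegral_congr_fun measurableSet_Ioc fun r hr => ?_).trans (integral_zero _ _)
    have hr' := Ioc_subset_Icc_self hr
    exact hmart r hr' (fun ω => Z ω * V' r ω) ((hZ.mono (F.mono hr'.1) le_rfl).mul (hVad r hr'))
      ⟨K * C, fun ω => by
        rw [abs_mul]; exact mul_le_mul (hZK ω) (hVC r hr' ω) (abs_nonneg _) hK0⟩
  have i2 : Integrable (fun ω => ∫ r in a..b, Z ω * V' r ω * D r ω) P := by
    simp only [intervalIntegral.integral_of_le hab]
    exact hint.integral_prod_left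
  have i1 : Integrable (fun ω => Z ω * V a ω * D a ω) P := by
    refine Integrable.of_bound ((hZm.mul (hVa.mono (F.le a) le_rfl)).mul (hDm a)).aestronglyMeasurable
      (K * C * (C + C + C * (b - a))) (ae_of_all _ fun ω => ?_)
    simp only [Real.norm_eq_abs, abs_mul]
    exact mul_le_mul (mul_le_mul (hZK _) (hVaC _) (abs_nonneg _) hK0) (hDC _ haI _)
      (abs_nonneg _) (by positivity)
  have e : (fun ω => Z ω * (G b ω * V b ω - G a ω * V a ω
      - ∫ r in a..b, (V' r ω * G r ω + V r ω * H r ω)))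
      = fun ω => Z ω * V a ω * D a ω + ∫ r in a..b, Z ω * V' r ω * D r ω := by
    funext ω
    simp only [path ω, mul_add, mul_assoc, intervalIntegral.integral_const_mul]
  rw [e]
  exact ⟨i1.add i2, by rw [integral_add i1 i2, hVaD, hswap, add_zero]⟩

/-! ### Trigonometric test functions -/

/-- Space cutoffs at scale `n`, with derivatives of size `O(1/n)`. -/
lemma exists_space_cutoff : ∃ (A : ℝ) (χ : ℕ → ℝ → ℝ), ∀ n, ContDiff ℝ 2 (χ n) ∧
    (∀ x, |χ n x| ≤ 1) ∧ (∀ x, 2 * ((n:ℝ) + 1) < |x| → χ n x = 0) ∧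
    (∀ x, |x| ≤ (n:ℝ) + 1 → χ n x = 1) ∧
    (∀ x, |deriv (χ n) x| ≤ A / ((n:ℝ) + 1)) ∧ (∀ x, |deriv (deriv (χ n)) x| ≤ A / ((n:ℝ) + 1)) := by
  let φ : ContDiffBump (0 : ℝ) := ⟨1, 2, one_pos, one_lt_two⟩
  have hφ : ContDiff ℝ 2 φ := φ.contDiff
  have hφ' : ContDiff ℝ 1 (deriv φ) := ((contDiff_succ_iff_deriv (n := 1)).1 hφ).2.2
  have c1 : HasCompactSupport (deriv φ) := φ.hasCompactSupport.deriv
  obtain ⟨A₁, hA₁⟩ := c1.exists_bound_of_continuous hφ'.continuous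
  obtain ⟨A₂, hA₂⟩ := c1.deriv.exists_bound_of_continuous (hφ'.continuous_deriv le_rfl)
  have hA₁0 : 0 ≤ A₁ := (norm_nonneg _).trans (hA₁ 0)
  have hA₂0 : 0 ≤ A₂ := (norm_nonneg _).trans (hA₂ 0)
  refine ⟨max A₁ A₂, fun n x => φ (((n:ℝ) + 1)⁻¹ * x), fun n => ?_⟩
  set c : ℝ := ((n:ℝ) + 1)⁻¹ with hc
  have hn : 0 < (n:ℝ) + 1 := by positivity
  have hcpos : 0 < c := by positivity
  have hc1 : c ≤ 1 := inv_le_one_of_one_le₀ (by linarith [(Nat.cast_nonneg n : (0:ℝ) ≤ n)])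
  have d1 : deriv (fun x => φ (c * x)) = fun x => c * deriv φ (c * x) := by
    funext x
    have := ((hφ.differentiable two_ne_zero (c * x)).hasDerivAt.comp x
      ((hasDerivAt_id x).const_mul c)).deriv
    simpa [Function.comp_def, mul_comm] using this
  have d2 : deriv (fun x => c * deriv φ (c * x)) = fun x => c * (c * deriv (deriv φ) (c * x)) := by
    funext x
    have := (((hφ'.differentiable one_ne_zero (c * x)).hasDerivAt.comp x
      ((hasDerivAt_id x).const_mul c)).const_mul c).deriv
    simpa [Function.comp_def, mul_comm] using this
  refine ⟨hφ.comp (contDiff_const.mul contDiff_id), fun x => ?_, fun x hx => ?_, fun x hx => ?_,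
    fun x => ?_, fun x => ?_⟩
  · rw [abs_of_nonneg φ.nonneg]; exact φ.le_one
  · refine φ.zero_of_le_dist ?_
    rw [Real.dist_eq, sub_zero, abs_mul, abs_of_pos hcpos]
    change 2 ≤ c * |x|
    rw [hc, inv_mul_eq_div, le_div_iff₀ hn]; exact hx.le
  · refine φ.one_of_mem_closedBall ?_
    rw [Metric.mem_closedBall, Real.dist_eq, sub_zero, abs_mul, abs_of_pos hcpos]
    change c * |x| ≤ 1
    rw [hc, inv_mul_eq_div, div_le_iff₀ hn]; linarith
  · rw [d1, abs_mul, abs_of_pos hcpos, div_eq_inv_mul]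
    exact mul_le_mul_of_nonneg_left ((hA₁ _).trans (le_max_left _ _)) hcpos.le
  · rw [d1, d2, abs_mul, abs_mul, abs_of_pos hcpos, div_eq_inv_mul]
    refine mul_le_mul_of_nonneg_left ?_ hcpos.le
    calc c * |deriv (deriv φ) (c * x)| ≤ 1 * A₂ :=
          mul_le_mul hc1 (hA₂ _) (abs_nonneg _) zero_le_one
      _ ≤ _ := by rw [one_mul]; exact le_max_right _ _

/-- The part of `L(χ cos(lΦ - c))` that carries derivatives of the space cutoff `χ`. -/
def cutoffErr (μ σ Φ : ℝ → ℝ → ℝ) (χ : ℝ → ℝ) (l c t x : ℝ) : ℝ :=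
  μ t x * (deriv χ x * Real.cos (l * Φ t x - c))
    + (1 / 2) * (σ t x) ^ 2 * (deriv (deriv χ) x * Real.cos (l * Φ t x - c))
    - σ t x * (deriv χ x * (l * Real.sin (l * Φ t x - c)))

section trig

variable {T M L : ℝ} {μ σ Φ Φt Φx Φxx : ℝ → ℝ → ℝ}

/-- The test function `χ(x) cos(l Φ(t,x) - c)`; the generator maps it to
`-l β χ sin(lΦ - c) - l²/2 χ cos(lΦ - c)` up to terms carrying derivatives of `χ`, where `β` is the
drift of `Φ(t, X_t)`. -/
lemma LampertiData.exists_stripTest (h : LampertiData T M L μ σ Φ Φt Φx Φxx) {χ : ℝ → ℝ}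
    (hχ : ContDiff ℝ 2 χ) {R : ℝ} (hR : ∀ x, R < |x| → χ x = 0) (l c : ℝ) :
    ∃ ft fx fxx : ℝ → ℝ → ℝ,
      StripTest T R (fun t x => χ x * Real.cos (l * Φ t x - c)) ft fx fxx ∧
      ∀ t ∈ Ioo 0 T, ∀ x, genOf μ σ ft fx fxx t x =
        -(l * genOf μ σ Φt Φx Φxx t x * (χ x * Real.sin (l * Φ t x - c)))
          - l ^ 2 / 2 * (χ x * Real.cos (l * Φ t x - c)) + cutoffErr μ σ Φ χ l c t x := by
  have hχ' : ContDiff ℝ 1 (deriv χ) := ((contDiff_succ_iff_deriv (n := 1)).1 hχ).2.2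
  have dχ : ∀ x, HasDerivAt χ (deriv χ x) x := fun x =>
    (hχ.differentiable two_ne_zero x).hasDerivAt
  have dχ' : ∀ x, HasDerivAt (deriv χ) (deriv (deriv χ) x) x := fun x =>
    (hχ'.differentiable one_ne_zero x).hasDerivAt
  have cχ : Continuous (fun p : ℝ × ℝ => χ p.2) := hχ.continuous.comp continuous_snd
  have cχ' : Continuous (fun p : ℝ × ℝ => deriv χ p.2) := hχ'.continuous.comp continuous_snd
  have cχ'' : Continuous (fun p : ℝ × ℝ => deriv (deriv χ) p.2) :=
    (hχ'.continuous_deriv le_rfl).comp continuous_snd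
  have cC : ContinuousOn (fun p : ℝ × ℝ => Real.cos (l * Φ p.1 p.2 - c)) (Ioo 0 T ×ˢ univ) :=
    Real.continuous_cos.comp_continuousOn ((continuousOn_const.mul h.cont).sub continuousOn_const)
  have cS : ContinuousOn (fun p : ℝ × ℝ => Real.sin (l * Φ p.1 p.2 - c)) (Ioo 0 T ×ˢ univ) :=
    Real.continuous_sin.comp_continuousOn ((continuousOn_const.mul h.cont).sub continuousOn_const)
  have dC : ∀ t ∈ Ioo 0 T, ∀ x, HasDerivAt (fun y => Real.cos (l * Φ t y - c))
      (-Real.sin (l * Φ t x - c) * (l * Φx t x)) x := fun t ht x =>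
    (((h.hasDerivAt_x t ht x).const_mul l).sub_const c).cos
  have dS : ∀ t ∈ Ioo 0 T, ∀ x, HasDerivAt (fun y => Real.sin (l * Φ t y - c))
      (Real.cos (l * Φ t x - c) * (l * Φx t x)) x := fun t ht x =>
    (((h.hasDerivAt_x t ht x).const_mul l).sub_const c).sin
  refine ⟨fun t x => χ x * (-Real.sin (l * Φ t x - c) * (l * Φt t x)),
    fun t x => deriv χ x * Real.cos (l * Φ t x - c)
      + χ x * (-Real.sin (l * Φ t x - c) * (l * Φx t x)),
    fun t x => (deriv (deriv χ) x * Real.cos (l * Φ t x - c)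
      + deriv χ x * (-Real.sin (l * Φ t x - c) * (l * Φx t x)))
      + (deriv χ x * (-Real.sin (l * Φ t x - c) * (l * Φx t x))
        + χ x * (-(Real.cos (l * Φ t x - c) * (l * Φx t x)) * (l * Φx t x)
          + -Real.sin (l * Φ t x - c) * (l * Φxx t x))), ?_, ?_⟩
  · refine ⟨fun t ht x => ?_, fun t ht x => (dχ x).mul (dC t ht x), fun t ht x => ?_,
      cχ.continuousOn.mul cC, ?_, ?_, ?_, fun t _ x hx => by simp [hR x hx]⟩
    · exact ((((h.hasDerivAt_t t ht x).const_mul l).sub_const c).cos).const_mul _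
    · exact ((dχ' x).mul (dC t ht x)).add ((dχ x).mul
        ((dS t ht x).neg.mul ((h.hasDerivAt_xx t ht x).const_mul l)))
    · exact cχ.continuousOn.mul (cS.neg.mul (continuousOn_const.mul h.cont_t))
    · exact (cχ'.continuousOn.mul cC).add
        (cχ.continuousOn.mul (cS.neg.mul (continuousOn_const.mul h.cont_x)))
    · have lx := (continuousOn_const (c := l)).mul h.cont_x
      exact ((cχ''.continuousOn.mul cC).add (cχ'.continuousOn.mul (cS.neg.mul lx))).add
        ((cχ'.continuousOn.mul (cS.neg.mul lx)).add (cχ.continuousOn.mul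
          (((cC.mul lx).neg.mul lx).add (cS.neg.mul (continuousOn_const.mul h.cont_xx)))))
  · intro t ht x
    have h1 := h.sigma_mul t ht x
    simp only [genOf, cutoffErr]
    linear_combination (-(σ t x * (deriv χ x * (l * Real.sin (l * Φ t x - c))))
      - (1 / 2) * l ^ 2 * χ x * Real.cos (l * Φ t x - c) * (σ t x * Φx t x + 1)) * h1

lemma LampertiData.abs_cutoffErr_le (h : LampertiData T M L μ σ Φ Φt Φx Φxx) {χ : ℝ → ℝ} {ε : ℝ}
    (h1 : ∀ x, |deriv χ x| ≤ ε) (h2 : ∀ x, |deriv (deriv χ) x| ≤ ε) (l c : ℝ) :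
    ∀ t ∈ Ioo 0 T, ∀ x, |cutoffErr μ σ Φ χ l c t x| ≤ (M + M ^ 2 + M * |l|) * ε := by
  intro t ht x
  have hM := h.M_pos
  have hμ := h.abs_mu_le t ht x
  have hσ := h.abs_sigma_le t ht x
  have hc := Real.abs_cos_le_one (l * Φ t x - c)
  have hs := Real.abs_sin_le_one (l * Φ t x - c)
  have hε : 0 ≤ ε := (abs_nonneg _).trans (h1 x)
  have e1 : |μ t x * (deriv χ x * Real.cos (l * Φ t x - c))| ≤ M * (ε * 1) := by
    rw [abs_mul, abs_mul]; gcongr; exact h1 x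
  have e2 : |(1 / 2) * (σ t x) ^ 2 * (deriv (deriv χ) x * Real.cos (l * Φ t x - c))|
      ≤ 1 * M ^ 2 * (ε * 1) := by
    rw [abs_mul, abs_mul, abs_mul, abs_pow]
    gcongr
    · norm_num [abs_of_pos]
    · exact h2 x
  have e3 : |σ t x * (deriv χ x * (l * Real.sin (l * Φ t x - c)))| ≤ M * (ε * (|l| * 1)) := by
    rw [abs_mul, abs_mul, abs_mul]; gcongr; exact h1 x
  calc |cutoffErr μ σ Φ χ l c t x| ≤ _ := (abs_sub _ _).trans (add_le_add_left (abs_add_le _ _) _)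
    _ ≤ M * (ε * 1) + 1 * M ^ 2 * (ε * 1) + M * (ε * (|l| * 1)) := by gcongr
    _ = _ := by ring

end trig

/-! ### The transformed process minus its drift is a Brownian motion -/

/-- The nearest point of `[a, b]`. -/
def clampTo (a b r : ℝ) : ℝ := max a (min b r)

lemma continuous_clampTo (a b : ℝ) : Continuous (clampTo a b) :=
  continuous_const.max (continuous_const.min continuous_id)

lemma clampTo_mem {a b : ℝ} (hab : a ≤ b) (r : ℝ) : clampTo a b r ∈ Icc a b :=
  ⟨le_max_left _ _, max_le hab (min_le_left _ _)⟩

lemma clampTo_of_mem {a b r : ℝ} (hr : r ∈ Icc a b) : clampTo a b r = r := by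
  rw [clampTo, min_eq_right hr.2, max_eq_right hr.1]

/-- The integral over `[s, u]` of a process that is measurable for a given `σ`-algebra at all times
in `[s, u]` is measurable for that `σ`-algebra. -/
lemma measurable_integral_of_continuousOn {m' : MeasurableSpace Ω} {s u : ℝ} (hsu : s ≤ u)
    {ψ : ℝ → Ω → ℝ} (hc : ∀ ω, ContinuousOn (fun r => ψ r ω) (Icc s u))
    (hm : ∀ r ∈ Icc s u, Measurable[m'] (ψ r)) : Measurable[m'] fun ω => ∫ r in s..u, ψ r ω := by
  have h1 := measurable_integral_of_continuous (H := fun r => ψ (clampTo s u r))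
    (fun ω => (hc ω).comp_continuous (continuous_clampTo s u) (clampTo_mem hsu))
    (fun r => hm _ (clampTo_mem hsu r)) s u
  convert h1 using 2 with ω
  refine intervalIntegral.integral_congr fun r hr => ?_
  rw [uIcc_of_le hsu] at hr
  simp only [clampTo_of_mem hr]

lemma continuous_slice {T : ℝ} {k : ℝ → ℝ → ℝ}
    (hk : ContinuousOn (fun p : ℝ × ℝ => k p.1 p.2) (Ioo 0 T ×ˢ univ)) {t : ℝ} (ht : t ∈ Ioo 0 T) :
    Continuous (k t) :=
  hk.comp_continuous (f := fun x => (t, x)) (by fun_prop) (fun _ => ⟨ht, mem_univ _⟩)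

lemma LampertiData.cont_beta {T M L : ℝ} {μ σ Φ Φt Φx Φxx : ℝ → ℝ → ℝ}
    (h : LampertiData T M L μ σ Φ Φt Φx Φxx) :
    ContinuousOn (fun p : ℝ × ℝ => genOf μ σ Φt Φx Φxx p.1 p.2) (Ioo 0 T ×ˢ univ) :=
  continuousOn_genOf h.cont_mu h.cont_sigma h.cont_t h.cont_x h.cont_xx

lemma LampertiData.cont_cutoffErr {T M L : ℝ} {μ σ Φ Φt Φx Φxx : ℝ → ℝ → ℝ}
    (h : LampertiData T M L μ σ Φ Φt Φx Φxx) {χ : ℝ → ℝ} (hχ : ContDiff ℝ 2 χ) (l c : ℝ) :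
    ContinuousOn (fun p : ℝ × ℝ => cutoffErr μ σ Φ χ l c p.1 p.2) (Ioo 0 T ×ˢ univ) := by
  have hχ' : ContDiff ℝ 1 (deriv χ) := ((contDiff_succ_iff_deriv (n := 1)).1 hχ).2.2
  have cχ' : Continuous (fun p : ℝ × ℝ => deriv χ p.2) := hχ'.continuous.comp continuous_snd
  have cχ'' : Continuous (fun p : ℝ × ℝ => deriv (deriv χ) p.2) :=
    (hχ'.continuous_deriv le_rfl).comp continuous_snd
  have cC : ContinuousOn (fun p : ℝ × ℝ => Real.cos (l * Φ p.1 p.2 - c)) (Ioo 0 T ×ˢ univ) :=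
    Real.continuous_cos.comp_continuousOn ((continuousOn_const.mul h.cont).sub continuousOn_const)
  have cS : ContinuousOn (fun p : ℝ × ℝ => Real.sin (l * Φ p.1 p.2 - c)) (Ioo 0 T ×ˢ univ) :=
    Real.continuous_sin.comp_continuousOn ((continuousOn_const.mul h.cont).sub continuousOn_const)
  exact ((h.cont_mu.mul (cχ'.continuousOn.mul cC)).add
    ((continuousOn_const.mul (h.cont_sigma.pow 2)).mul (cχ''.continuousOn.mul cC))).sub
    (h.cont_sigma.mul (cχ'.continuousOn.mul (continuousOn_const.mul cS)))

section levy

variable [m : MeasurableSpace Ω] {P : Measure Ω} [IsProbabilityMeasure P]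
  {F : Filtration ℝ m} {T M L s : ℝ} {μ σ Φ Φt Φx Φxx : ℝ → ℝ → ℝ} {ξ : ℝ → Ω → ℝ}

/-- Itô's formula for `χ(ξ) cos(lΦ - c) · e^{l²r/2} cos(lB - C - c)`, where `B` is the integral of the
drift `β` along the path, truncated in space at level `R`. -/
lemma trig_product (h : LampertiData T M L μ σ Φ Φt Φx Φxx) (hs : 0 < s)
    (hξ : ∀ ω, ContinuousOn (fun u => ξ u ω) (Icc s T)) (had : ∀ u, Measurable[F u] (ξ u))
    (hmp : MPAt T μ σ P F s ξ) {a b : ℝ} (hsa : s ≤ a) (hab : a ≤ b) (hb : b < T)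
    {χ : ℝ → ℝ} (hχ : ContDiff ℝ 2 χ) {R : ℝ} (hR0 : 0 ≤ R) (hR : ∀ x, R < |x| → χ x = 0)
    (hχ1 : ∀ x, |χ x| ≤ 1) {ε : ℝ} (h1 : ∀ x, |deriv χ x| ≤ ε) (h2 : ∀ x, |deriv (deriv χ) x| ≤ ε)
    (l c : ℝ) {Z C : Ω → ℝ} (hZ : Measurable[F a] Z) (hC : Measurable[F a] C)
    {K : ℝ} (hZK : ∀ ω, |Z ω| ≤ K) {x : ℝ → Ω → ℝ} (hx : x = fun r => ξ (clampTo s b r))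
    {y B β V V' G H : ℝ → Ω → ℝ} (hy : y = fun r ω => l * Φ (clampTo s b r) (x r ω) - c)
    (hβ : β = fun r ω => genOf μ σ Φt Φx Φxx (clampTo s b r) (clampTo (-R) R (x r ω)))
    (hB : B = fun r ω => ∫ q in s..r, β q ω)
    (hV : V = fun r ω => Real.exp (l ^ 2 * r / 2) * Real.cos (l * B r ω - C ω - c))
    (hV' : V' = fun r ω => Real.exp (l ^ 2 * r / 2) * (l ^ 2 / 2 * Real.cos (l * B r ω - C ω - c)
      - l * β r ω * Real.sin (l * B r ω - C ω - c)))
    (hG : G = fun r ω => χ (x r ω) * Real.cos (y r ω))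
    (hH : H = fun r ω => -(l * β r ω * (χ (x r ω) * Real.sin (y r ω)))
      - l ^ 2 / 2 * (χ (x r ω) * Real.cos (y r ω))
      + cutoffErr μ σ Φ χ l c (clampTo s b r) (x r ω)) :
    Integrable (fun ω => Z ω * (G b ω * V b ω - G a ω * V a ω
      - ∫ r in a..b, (V' r ω * G r ω + V r ω * H r ω))) P ∧
    ∫ ω, Z ω * (G b ω * V b ω - G a ω * V a ω - ∫ r in a..b, (V' r ω * G r ω + V r ω * H r ω)) ∂P
      = 0 ∧ ∀ ω, Continuous fun r => V' r ω * G r ω + V r ω * H r ω := by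
  have hsb : s ≤ b := hsa.trans hab
  have hκ := clampTo_mem hsb
  have hκT : ∀ r, clampTo s b r ∈ Ioo 0 T := fun r => ⟨hs.trans_le (hκ r).1, (hκ r).2.trans_lt hb⟩
  have hκr : ∀ r ∈ Icc a b, clampTo s b r = r := fun r hr => clampTo_of_mem ⟨hsa.trans hr.1, hr.2⟩
  have hxc : ∀ ω, Continuous fun r => x r ω := fun ω => by
    rw [hx]
    exact (hξ ω).comp_continuous (continuous_clampTo s b)
      (fun r => ⟨(hκ r).1, (hκ r).2.trans hb.le⟩)
  have hkc : ∀ {k : ℝ → ℝ → ℝ},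
      ContinuousOn (fun p : ℝ × ℝ => k p.1 p.2) (Ioo 0 T ×ˢ univ) → ∀ {z : ℝ → ℝ}, Continuous z →
      Continuous fun r => k (clampTo s b r) (z r) := fun hk z hz =>
    hk.comp_continuous (f := fun r => (clampTo s b r, z r))
      ((continuous_clampTo s b).prodMk hz) (fun r => ⟨hκT r, mem_univ _⟩)
  have hyc : ∀ ω, Continuous fun r => y r ω := fun ω => by
    rw [hy]; exact (continuous_const.mul (hkc h.cont (hxc ω))).sub continuous_const
  have hβc : ∀ ω, Continuous fun r => β r ω := fun ω => by
    rw [hβ]; exact hkc h.cont_beta ((continuous_clampTo _ _).comp (hxc ω))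
  have hBd : ∀ ω r, HasDerivAt (fun r => B r ω) (β r ω) r := fun ω r => by
    rw [hB]
    exact intervalIntegral.integral_hasDerivAt_right ((hβc ω).intervalIntegrable _ _)
      ((hβc ω).stronglyMeasurableAtFilter _ _) (hβc ω).continuousAt
  have hBc : ∀ ω, Continuous fun r => B r ω := fun ω =>
    continuous_iff_continuousAt.2 fun r => (hBd ω r).continuousAt
  have hec : ∀ ω, Continuous fun r => cutoffErr μ σ Φ χ l c (clampTo s b r) (x r ω) := fun ω =>
    hkc (h.cont_cutoffErr hχ l c) (hxc ω)
  have hxF : ∀ r, Measurable[F (clampTo s b r)] (x r) := fun r => by rw [hx]; exact had _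
  have hβF : ∀ r, Measurable[F (clampTo s b r)] (β r) := fun r => by
    rw [hβ]
    exact ((continuous_slice h.cont_beta (hκT r)).comp
      (continuous_clampTo (-R) R)).measurable.comp (hxF r)
  have hβm : ∀ r, Measurable (β r) := fun r => (hβF r).mono (F.le _) le_rfl
  have hxm : ∀ r, Measurable (x r) := fun r => (hxF r).mono (F.le _) le_rfl
  have hym : ∀ r, Measurable (y r) := fun r => by
    rw [hy]
    exact (((continuous_slice h.cont (hκT r)).measurable.comp (hxm r)).const_mul l).sub_const c
  have hBm : ∀ r, Measurable (B r) := fun r => by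
    rw [hB]; exact measurable_integral_of_continuous hβc hβm s r
  have hBF : ∀ r ∈ Icc a b, Measurable[F r] (B r) := fun r hr => by
    rw [hB]
    refine measurable_integral_of_continuousOn (hsa.trans hr.1) (fun ω => (hβc ω).continuousOn) ?_
    intro q hq
    have := hβF q
    rw [clampTo_of_mem ⟨hq.1, hq.2.trans hr.2⟩] at this
    exact this.mono (F.mono hq.2) le_rfl
  have hCm : Measurable C := hC.mono (F.le a) le_rfl
  -- the truncated drift is bounded, being a continuous function evaluated on a compact set
  obtain ⟨K₁, hK₁⟩ : ∃ K₁, ∀ r ω, |β r ω| ≤ K₁ := by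
    have hcomp : IsCompact (Icc s b ×ˢ Icc (-R) R) := isCompact_Icc.prod isCompact_Icc
    obtain ⟨K₁, hK₁⟩ := hcomp.exists_bound_of_continuousOn
      (h.cont_beta.mono (s := Ioo 0 T ×ˢ univ) (t := Icc s b ×ˢ Icc (-R) R)
        (fun p hp => ⟨⟨hs.trans_le hp.1.1, hp.1.2.trans_lt hb⟩, mem_univ _⟩))
    refine ⟨K₁, fun r ω => ?_⟩
    rw [hβ]
    exact hK₁ (clampTo s b r, clampTo (-R) R (x r ω)) ⟨hκ r, clampTo_mem (by linarith) _⟩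
  have hK₁' : 0 ≤ |K₁| := abs_nonneg _
  have hK₁'' : ∀ r ω, |β r ω| ≤ |K₁| := fun r ω => (hK₁ r ω).trans (le_abs_self _)
  have hE := h.abs_cutoffErr_le h1 h2 l c
  set E := (M + M ^ 2 + M * |l|) * ε with hEdef
  set e := Real.exp (l ^ 2 * b / 2) with he
  have hee : ∀ r ≤ b, Real.exp (l ^ 2 * r / 2) ≤ e := fun r hr => by
    rw [he]; gcongr
  have he0 : 0 ≤ e := (Real.exp_pos _).le
  have hcos := fun z => Real.abs_cos_le_one z
  have hsin := fun z => Real.abs_sin_le_one z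
  obtain ⟨ft, fx, fxx, hf, hgen⟩ := h.exists_stripTest hχ hR l c
  have hGc : ∀ ω, Continuous fun r => G r ω := fun ω => by
    rw [hG]; exact (hχ.continuous.comp (hxc ω)).mul (Real.continuous_cos.comp (hyc ω))
  have hl0 := abs_nonneg l
  have hE0 : 0 ≤ |E| := abs_nonneg _
  have hl2 : 0 ≤ l ^ 2 / 2 := by positivity
  have hlK : 0 ≤ |l| * |K₁| := by positivity
  have heK : 0 ≤ e * (l ^ 2 / 2 + |l| * |K₁|) := by positivity
  set CC := 1 + (|l| * |K₁| + l ^ 2 / 2 + |E|) + e + e * (l ^ 2 / 2 + |l| * |K₁|) with hCC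
  have hχcos : ∀ p q, |χ p * Real.cos q| ≤ 1 := fun p q => by
    rw [abs_mul]; exact mul_le_one₀ (hχ1 p) (abs_nonneg _) (hcos q)
  have hχsin : ∀ p q, |χ p * Real.sin q| ≤ 1 := fun p q => by
    rw [abs_mul]; exact mul_le_one₀ (hχ1 p) (abs_nonneg _) (hsin q)
  have hHc : ∀ ω, Continuous fun r => H r ω := by
    intro ω
    rw [hH]
    have := hχ.continuous.comp (hxc ω)
    have h3 := Real.continuous_cos.comp (hyc ω)
    have h4 := Real.continuous_sin.comp (hyc ω)
    exact (((continuous_const.mul (hβc ω)).mul (this.mul h4)).neg.sub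
      (continuous_const.mul (this.mul h3))).add (hec ω)
  have hV'c : ∀ ω, Continuous fun r => V' r ω := by
    intro ω
    rw [hV']
    have := hβc ω
    have := hBc ω
    fun_prop
  have hVc : ∀ ω, Continuous fun r => V r ω := by
    intro ω
    rw [hV]
    have := hBc ω
    fun_prop
  suffices hpr : _ ∧ _ from
    ⟨hpr.1, hpr.2, fun ω => ((hV'c ω).mul (hGc ω)).add ((hVc ω).mul (hHc ω))⟩
  -- `G - ∫ H` is a martingale by the test function `χ cos(lΦ - c)`, and `V'` is the derivative of `V`
  refine product_rule (C := CC) hab hGc hHc hV'c ?_ ?_ ?_ ?_ ?_ ?_ ?_ ?_ ?_ ?_ ?_ hZ hZK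
  · intro ω r
    rw [hV, hV']
    have d1 : HasDerivAt (fun r : ℝ => Real.exp (l ^ 2 * r / 2))
        (Real.exp (l ^ 2 * r / 2) * (l ^ 2 / 2)) r := by
      have := (((hasDerivAt_id r).const_mul (l ^ 2)).div_const 2).exp
      simpa using this
    have d2 := ((((hBd ω r).const_mul l).sub_const (C ω)).sub_const c).cos
    refine (d1.mul d2).congr_deriv ?_
    ring
  · intro r
    rw [hG]
    exact (hχ.continuous.measurable.comp (hxm r)).mul (Real.measurable_cos.comp (hym r))
  · intro r
    rw [hH]
    have i1 := hχ.continuous.measurable.comp (hxm r)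
    have i2 := Real.measurable_cos.comp (hym r)
    have i3 := Real.measurable_sin.comp (hym r)
    exact ((((hβm r).const_mul l).mul (i1.mul i3)).neg.sub ((i1.mul i2).const_mul _)).add
      ((continuous_slice (h.cont_cutoffErr hχ l c) (hκT r)).measurable.comp (hxm r))
  · intro r
    rw [hV']
    have := hβm r
    have := hBm r
    fun_prop
  · rw [hV]
    have := hBF a ⟨le_rfl, hab⟩
    fun_prop
  · intro r hr
    rw [hV']
    have i1 := hβF r
    rw [hκr r hr] at i1
    have i2 := hBF r hr
    have i3 := hC.mono (F.mono hr.1) le_rfl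
    fun_prop
  · intro r _ ω
    rw [hG]
    refine (hχcos _ _).trans ?_
    linarith
  · intro r _ ω
    rw [hH]
    have i1 : |l * β r ω * (χ (x r ω) * Real.sin (y r ω))| ≤ |l| * |K₁| := by
      rw [abs_mul, abs_mul]
      calc _ ≤ |l| * |K₁| * 1 := by
            exact mul_le_mul (mul_le_mul_of_nonneg_left (hK₁'' r ω) hl0) (hχsin _ _)
              (abs_nonneg _) hlK
        _ = _ := mul_one _
    have i2 : |l ^ 2 / 2 * (χ (x r ω) * Real.cos (y r ω))| ≤ l ^ 2 / 2 := by
      rw [abs_mul, abs_of_nonneg hl2]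
      exact mul_le_of_le_one_right hl2 (hχcos _ _)
    have i3 := (hE _ (hκT r) (x r ω)).trans (le_abs_self E)
    rw [abs_le] at i1 i2 i3 ⊢
    constructor <;> linarith [i1.1, i1.2, i2.1, i2.2, i3.1, i3.2]
  · intro ω
    rw [hV]
    have : |Real.exp (l ^ 2 * a / 2) * Real.cos (l * B a ω - C ω - c)| ≤ e := by
      rw [abs_mul, Real.abs_exp]
      exact (mul_le_of_le_one_right (Real.exp_pos _).le (hcos _)).trans (hee a hab)
    refine this.trans ?_
    linarith
  · intro r hr ω
    rw [hV']
    refine le_trans (b := e * (l ^ 2 / 2 + |l| * |K₁|)) ?_ (by linarith)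
    simp only
    rw [abs_mul, Real.abs_exp]
    have i1 : |l ^ 2 / 2 * Real.cos (l * B r ω - C ω - c)| ≤ l ^ 2 / 2 := by
      rw [abs_mul, abs_of_nonneg hl2]
      exact mul_le_of_le_one_right hl2 (hcos _)
    have i2 : |l * β r ω * Real.sin (l * B r ω - C ω - c)| ≤ |l| * |K₁| := by
      rw [abs_mul, abs_mul]
      calc _ ≤ |l| * |K₁| * 1 := by
            exact mul_le_mul (mul_le_mul_of_nonneg_left (hK₁'' r ω) hl0) (hsin _)
              (abs_nonneg _) hlK
        _ = _ := mul_one _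
    exact mul_le_mul (hee r hr.2) ((abs_sub _ _).trans (add_le_add i1 i2)) (abs_nonneg _) he0
  · intro r hr ζ hζ hζK
    obtain ⟨K', hK'⟩ := hζK
    have := hmp.integral_eq_zero hs h.cont_mu h.cont_sigma hξ hf (hsa.trans hr.1) hr.2 hb hζ hK'
    rw [← this]
    refine integral_congr_ae (ae_of_all _ fun ω => ?_)
    have e1 : ∀ q ∈ Icc a b, x q ω = ξ q ω := fun q hq => by rw [hx]; simp only; rw [hκr q hq]
    have e2 : ∀ q ∈ Icc a b, G q ω = χ (ξ q ω) * Real.cos (l * Φ q (ξ q ω) - c) := fun q hq => by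
      rw [hG, hy]; simp only; rw [hκr q hq, e1 q hq]
    have e3 : ∫ q in r..b, H q ω = ∫ q in r..b, genOf μ σ ft fx fxx q (ξ q ω) := by
      refine intervalIntegral.integral_congr fun q hq => ?_
      rw [uIcc_of_le hr.2] at hq
      have hq' : q ∈ Icc a b := ⟨hr.1.trans hq.1, hq.2⟩
      have hqT := hκT q
      rw [hκr q hq'] at hqT
      change H q ω = _
      rw [hgen q hqT, hH, hy, hβ]
      simp only
      rw [hκr q hq', e1 q hq']
      by_cases hbig : R < |ξ q ω|
      · simp [hR _ hbig]
      · rw [clampTo_of_mem (abs_le.1 (not_lt.1 hbig))]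
    simp only
    rw [e2 b ⟨hab, le_rfl⟩, e2 r hr, e3]

/-- `e^{l²r/2} χ(ξ_r) cos(l(Φ(r, ξ_r) - B_r) + C)` is a martingale up to an error that vanishes as
the derivatives of the cutoff `χ` do. -/
lemma levy_approx (h : LampertiData T M L μ σ Φ Φt Φx Φxx) (hs : 0 < s)
    (hξ : ∀ ω, ContinuousOn (fun u => ξ u ω) (Icc s T)) (had : ∀ u, Measurable[F u] (ξ u))
    (hmp : MPAt T μ σ P F s ξ) {a b : ℝ} (hsa : s ≤ a) (hab : a ≤ b) (hb : b < T)
    {χ : ℝ → ℝ} (hχ : ContDiff ℝ 2 χ) {R : ℝ} (hR0 : 0 ≤ R) (hR : ∀ x, R < |x| → χ x = 0)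
    (hχ1 : ∀ x, |χ x| ≤ 1) {ε : ℝ} (h1 : ∀ x, |deriv χ x| ≤ ε) (h2 : ∀ x, |deriv (deriv χ) x| ≤ ε)
    (l : ℝ) {Z C : Ω → ℝ} (hZ : Measurable[F a] Z) (hC : Measurable[F a] C)
    {K : ℝ} (hZK : ∀ ω, |Z ω| ≤ K) {N : ℝ → Ω → ℝ}
    (hN : N = fun r ω => Real.exp (l ^ 2 * r / 2) * (χ (ξ r ω) * Real.cos (l * (Φ r (ξ r ω)
      - ∫ q in s..r, genOf μ σ Φt Φx Φxx q (clampTo (-R) R (ξ q ω))) + C ω))) :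
    |∫ ω, Z ω * (N b ω - N a ω) ∂P| ≤
      K * (Real.exp (l ^ 2 * b / 2) * (2 * ((M + M ^ 2 + M * |l|) * ε)) * (b - a)) := by
  have hsb : s ≤ b := hsa.trans hab
  set B : ℝ → Ω → ℝ := fun r ω => ∫ q in s..r, genOf μ σ Φt Φx Φxx q (clampTo (-R) R (ξ q ω)) with hB
  have main : ∀ c : ℝ, ∃ U W : ℝ → Ω → ℝ,
      Integrable (fun ω => Z ω * (U b ω - U a ω - ∫ r in a..b, W r ω)) P ∧
      ∫ ω, Z ω * (U b ω - U a ω - ∫ r in a..b, W r ω) ∂P = 0 ∧ (∀ ω, Continuous fun r => W r ω) ∧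
      ∀ r ∈ Icc a b, ∀ ω, U r ω = Real.exp (l ^ 2 * r / 2) * (χ (ξ r ω) *
        (Real.cos (l * Φ r (ξ r ω) - c) * Real.cos (l * B r ω - C ω - c))) ∧
      W r ω = Real.exp (l ^ 2 * r / 2) *
        (-(l * genOf μ σ Φt Φx Φxx r (clampTo (-R) R (ξ r ω)) * χ (ξ r ω) *
          (Real.sin (l * Φ r (ξ r ω) - c) * Real.cos (l * B r ω - C ω - c)
            + Real.cos (l * Φ r (ξ r ω) - c) * Real.sin (l * B r ω - C ω - c)))
        + Real.cos (l * B r ω - C ω - c) * cutoffErr μ σ Φ χ l c r (ξ r ω)) := by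
    intro c
    obtain ⟨x, hx⟩ : ∃ x : ℝ → Ω → ℝ, x = fun r => ξ (clampTo s b r) := ⟨_, rfl⟩
    obtain ⟨y, hy⟩ : ∃ y : ℝ → Ω → ℝ, y = fun r ω => l * Φ (clampTo s b r) (x r ω) - c := ⟨_, rfl⟩
    obtain ⟨β, hβ⟩ : ∃ β : ℝ → Ω → ℝ, β = fun r ω => genOf μ σ Φt Φx Φxx (clampTo s b r)
      (clampTo (-R) R (x r ω)) := ⟨_, rfl⟩
    obtain ⟨B', hB'⟩ : ∃ B' : ℝ → Ω → ℝ, B' = fun r ω => ∫ q in s..r, β q ω := ⟨_, rfl⟩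
    obtain ⟨V, hV⟩ : ∃ V : ℝ → Ω → ℝ, V = fun r ω => Real.exp (l ^ 2 * r / 2) *
      Real.cos (l * B' r ω - C ω - c) := ⟨_, rfl⟩
    obtain ⟨V', hV'⟩ : ∃ V' : ℝ → Ω → ℝ, V' = fun r ω => Real.exp (l ^ 2 * r / 2) *
      (l ^ 2 / 2 * Real.cos (l * B' r ω - C ω - c)
        - l * β r ω * Real.sin (l * B' r ω - C ω - c)) := ⟨_, rfl⟩
    obtain ⟨G, hG⟩ : ∃ G : ℝ → Ω → ℝ, G = fun r ω => χ (x r ω) * Real.cos (y r ω) := ⟨_, rfl⟩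
    obtain ⟨H, hH⟩ : ∃ H : ℝ → Ω → ℝ, H = fun r ω => -(l * β r ω * (χ (x r ω) * Real.sin (y r ω)))
      - l ^ 2 / 2 * (χ (x r ω) * Real.cos (y r ω))
      + cutoffErr μ σ Φ χ l c (clampTo s b r) (x r ω) := ⟨_, rfl⟩
    obtain ⟨A1, A2, A3⟩ := trig_product h hs hξ had hmp hsa hab hb hχ hR0 hR hχ1 h1 h2 l c hZ hC hZK
      hx hy hβ hB' hV hV' hG hH
    refine ⟨fun r ω => G r ω * V r ω, fun r ω => V' r ω * G r ω + V r ω * H r ω, A1, A2, A3,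
      fun r hr ω => ?_⟩
    have e0 : B' r ω = B r ω := by
      simp only [hB', hβ, hx]
      refine intervalIntegral.integral_congr fun q hq => ?_
      rw [uIcc_of_le (hsa.trans hr.1)] at hq
      simp only [clampTo_of_mem (show q ∈ Icc s b from ⟨hq.1, hq.2.trans hr.2⟩)]
    have hr' : r ∈ Icc s b := ⟨hsa.trans hr.1, hr.2⟩
    simp only [hG, hV, hV', hH, e0]
    simp only [hβ, hy, hx, clampTo_of_mem hr']
    constructor <;> ring
  obtain ⟨U₀, W₀, A1, A2, A3, A4⟩ := main 0
  obtain ⟨U₁, W₁, B1, B2, B3, B4⟩ := main (Real.pi / 2)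
  obtain ⟨ω₀⟩ : Nonempty Ω := by
    by_contra h
    rw [not_nonempty_iff] at h
    have := measure_univ (μ := P)
    simp [eq_empty_of_isEmpty (univ : Set Ω)] at this
  have hK0 : 0 ≤ K := (abs_nonneg _).trans (hZK ω₀)
  have hE := h.abs_cutoffErr_le h1 h2 l
  set E := (M + M ^ 2 + M * |l|) * ε with hEdef
  have hE0 : 0 ≤ E := (abs_nonneg _).trans (hE 0 b ⟨hs.trans_le hsb, hb⟩ 0)
  have hba : 0 ≤ b - a := sub_nonneg.2 hab
  by_cases hint : Integrable (fun ω => Z ω * (N b ω - N a ω)) P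
  swap
  · rw [integral_undef hint, abs_zero]
    positivity
  have e1 := integral_sub (hint.sub A1) B1
  simp only [Pi.sub_apply] at e1
  rw [integral_sub hint A1, A2, B2, sub_zero, sub_zero] at e1
  rw [← e1]
  suffices hpt : ∀ ω, ‖Z ω * (N b ω - N a ω) - Z ω * (U₀ b ω - U₀ a ω - ∫ r in a..b, W₀ r ω)
      - Z ω * (U₁ b ω - U₁ a ω - ∫ r in a..b, W₁ r ω)‖
      ≤ K * (Real.exp (l ^ 2 * b / 2) * (2 * E) * (b - a)) by
    have := norm_integral_le_of_norm_le_const (μ := P) (ae_of_all _ hpt)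
    rwa [probReal_univ, mul_one] at this
  intro ω
  rw [← mul_sub, ← mul_sub, norm_mul]
  refine mul_le_mul (hZK ω) ?_ (norm_nonneg _) hK0
  have eN : ∀ r ∈ Icc a b, N r ω = U₀ r ω + U₁ r ω := by
    intro r hr
    rw [hN, (A4 r hr ω).1, (B4 r hr ω).1, Real.cos_sub_pi_div_two, Real.cos_sub_pi_div_two]
    simp only [sub_zero]
    have : l * (Φ r (ξ r ω) - B r ω) + C ω = l * Φ r (ξ r ω) - (l * B r ω - C ω) := by ring
    rw [this, Real.cos_sub]
    ring
  have hW : ∀ r ∈ uIoc a b, ‖W₀ r ω + W₁ r ω‖ ≤ Real.exp (l ^ 2 * b / 2) * (2 * E) := by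
    intro r hr
    rw [uIoc_of_le hab] at hr
    have hr' : r ∈ Icc a b := ⟨hr.1.le, hr.2⟩
    have hrT : r ∈ Ioo 0 T := ⟨hs.trans_le (hsa.trans hr'.1), hr.2.trans_lt hb⟩
    rw [(A4 r hr' ω).2, (B4 r hr' ω).2, ← mul_add, norm_mul, Real.norm_eq_abs, Real.abs_exp]
    refine mul_le_mul (by have := hr.2; gcongr) ?_ (norm_nonneg _) (Real.exp_pos _).le
    have e2 : ∀ p q k z w : ℝ, -(k * (Real.sin (p - 0) * Real.cos (q - 0)
        + Real.cos (p - 0) * Real.sin (q - 0))) + z + (-(k * (Real.sin (p - Real.pi / 2) *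
          Real.cos (q - Real.pi / 2) + Real.cos (p - Real.pi / 2) * Real.sin (q - Real.pi / 2)))
          + w) = z + w := by
      intro p q k z w
      simp only [sub_zero, Real.cos_sub_pi_div_two, Real.sin_sub_pi_div_two]
      ring
    rw [e2, two_mul]
    refine (abs_add_le _ _).trans (add_le_add ?_ ?_) <;>
    · rw [abs_mul]
      refine (mul_le_of_le_one_left (abs_nonneg _) (Real.abs_cos_le_one _)).trans (hE _ r hrT _)
  have hnorm := intervalIntegral.norm_integral_le_of_norm_le_const hW
  rw [intervalIntegral.integral_add ((A3 ω).intervalIntegrable _ _)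
    ((B3 ω).intervalIntegrable _ _), abs_of_nonneg hba] at hnorm
  refine le_trans (le_of_eq ?_) hnorm
  rw [eN b ⟨hab, le_rfl⟩, eN a ⟨le_rfl, hab⟩]
  congr 1
  ring

end levy

/-- Lévy's characterisation, in the form used below: `W` is adapted on `[t, T)` and
`e^{l²u/2} cos(l W_u + C)` is a martingale for every `l` and every `𝔉_a`-measurable phase `C`. -/
structure LevyBM [m : MeasurableSpace Ω] (P : Measure Ω) (F : Filtration ℝ m) (t T : ℝ)
    (W : ℝ → Ω → ℝ) : Prop where
  meas : ∀ u ∈ Ico t T, Measurable[F u] (W u)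
  levy : ∀ a b, t ≤ a → a ≤ b → b < T → ∀ l : ℝ, ∀ Z C : Ω → ℝ, Measurable[F a] Z →
    Measurable[F a] C → (∃ K, ∀ ω, |Z ω| ≤ K) →
    ∫ ω, Z ω * Real.cos (l * W b ω + C ω) ∂P
      = Real.exp (-(l ^ 2 * (b - a) / 2)) * ∫ ω, Z ω * Real.cos (l * W a ω + C ω) ∂P

lemma LevyBM.mono [m : MeasurableSpace Ω] {P : Measure Ω} {F : Filtration ℝ m} {s t T : ℝ}
    {W : ℝ → Ω → ℝ} (h : LevyBM P F s T W) (hst : s ≤ t) : LevyBM P F t T W :=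
  ⟨fun u hu => h.meas u ⟨hst.trans hu.1, hu.2⟩, fun a b ha => h.levy a b (hst.trans ha)⟩

section levy

variable [m : MeasurableSpace Ω] {P : Measure Ω} [IsProbabilityMeasure P]
  {F : Filtration ℝ m} {T M L s : ℝ} {μ σ Φ Φt Φx Φxx : ℝ → ℝ → ℝ} {ξ : ℝ → Ω → ℝ}

/-- Measurability of the drift integral of a process whose drift is a continuous function `k` of time
and state. -/
lemma measurable_drift (hs : 0 < s) (hξ : ∀ ω, ContinuousOn (fun u => ξ u ω) (Icc s T))
    (had : ∀ u, Measurable[F u] (ξ u)) {k : ℝ → ℝ → ℝ}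
    (hk : ContinuousOn (fun p : ℝ × ℝ => k p.1 p.2) (Ioo 0 T ×ˢ univ)) {z : ℝ → ℝ}
    (hz : Continuous z) {u : ℝ} (hu : u ∈ Ico s T) :
    Measurable[F u] fun ω => ∫ q in s..u, k q (z (ξ q ω)) := by
  refine measurable_integral_of_continuousOn hu.1 (fun ω => continuousOn_along hs hu.2 hk
    (hz.comp_continuousOn ((hξ ω).mono (Icc_subset_Icc_right hu.2.le)))) fun r hr => ?_
  exact ((continuous_slice hk ⟨hs.trans_le hr.1, hr.2.trans_lt hu.2⟩).comp hz).measurable.comp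
    ((had r).mono (F.mono hr.2) le_rfl)

/-- The transformed process minus its integrated drift. -/
def noise (μ σ Φ Φt Φx Φxx : ℝ → ℝ → ℝ) (s : ℝ) (ξ : ℝ → Ω → ℝ) (u : ℝ) (ω : Ω) : ℝ :=
  Φ u (ξ u ω) - ∫ q in s..u, genOf μ σ Φt Φx Φxx q (ξ q ω)

/-- The noise of a solution of the martingale problem is a Brownian motion: the error in `levy_approx`
vanishes as the space cutoffs increase to `1`, and dominated convergence passes to the limit. -/
theorem levyBM_noise (h : LampertiData T M L μ σ Φ Φt Φx Φxx) (hs : 0 < s)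
    (hξ : ∀ ω, ContinuousOn (fun u => ξ u ω) (Icc s T)) (had : ∀ u, Measurable[F u] (ξ u))
    (hmp : MPAt T μ σ P F s ξ) : LevyBM P F s T (noise μ σ Φ Φt Φx Φxx s ξ) := by
  have hmeas : ∀ u ∈ Ico s T, Measurable[F u] (noise μ σ Φ Φt Φx Φxx s ξ u) := fun u hu =>
    ((continuous_slice h.cont ⟨hs.trans_le hu.1, hu.2⟩).measurable.comp (had u)).sub
      (measurable_drift hs hξ had h.cont_beta continuous_id hu)
  refine ⟨hmeas, ?_⟩
  rintro a b hsa hab hb l Z C hZ hC ⟨K, hK⟩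
  obtain ⟨A, χ, hχ⟩ := exists_space_cutoff
  set R : ℕ → ℝ := fun n => 2 * ((n:ℝ) + 1) with hR
  set N : ℕ → ℝ → Ω → ℝ := fun n r ω => Real.exp (l ^ 2 * r / 2) * (χ n (ξ r ω) *
    Real.cos (l * (Φ r (ξ r ω)
      - ∫ q in s..r, genOf μ σ Φt Φx Φxx q (clampTo (-R n) (R n) (ξ q ω))) + C ω)) with hN
  set W := noise μ σ Φ Φt Φx Φxx s ξ with hW
  have haI : a ∈ Icc a b := ⟨le_rfl, hab⟩
  have hbI : b ∈ Icc a b := ⟨hab, le_rfl⟩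
  have happ : ∀ n, |∫ ω, Z ω * (N n b ω - N n a ω) ∂P| ≤ K * (Real.exp (l ^ 2 * b / 2) *
      (2 * ((M + M ^ 2 + M * |l|) * (A / ((n:ℝ) + 1)))) * (b - a)) := fun n =>
    levy_approx h hs hξ had hmp hsa hab hb (hχ n).1 (by positivity) (hχ n).2.2.1 (hχ n).2.1
      (hχ n).2.2.2.2.1 (hχ n).2.2.2.2.2 l hZ hC hK rfl
  have hNm : ∀ n, ∀ r ∈ Icc a b, Measurable (N n r) := by
    intro n r hr
    have hr' : r ∈ Ico s T := ⟨hsa.trans hr.1, hr.2.trans_lt hb⟩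
    have i0 : Measurable (ξ r) := (had r).mono (F.le r) le_rfl
    have i1 := (measurable_drift (F := F) hs hξ had h.cont_beta
      (continuous_clampTo (-R n) (R n)) hr').mono (F.le r) le_rfl
    have i2 := (continuous_slice h.cont ⟨hs.trans_le hr'.1, hr'.2⟩).measurable.comp i0
    have i3 := (hχ n).1.continuous.measurable.comp i0
    have i4 := hC.mono (F.le a) le_rfl
    exact (i3.mul (Real.measurable_cos.comp (((i2.sub i1).const_mul l).add i4))).const_mul _
  have hNle : ∀ n, ∀ r ∈ Icc a b, ∀ ω, |N n r ω| ≤ Real.exp (l ^ 2 * b / 2) := by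
    intro n r hr ω
    simp only [hN]
    rw [abs_mul, Real.abs_exp, abs_mul]
    have i1 : Real.exp (l ^ 2 * r / 2) ≤ Real.exp (l ^ 2 * b / 2) := by
      have := hr.2; gcongr
    refine (mul_le_of_le_one_right (Real.exp_pos _).le ?_).trans i1
    exact mul_le_one₀ ((hχ n).2.1 _) (abs_nonneg _) (Real.abs_cos_le_one _)
  -- along a fixed path the truncations are inactive for large `n`
  have hNev : ∀ ω, ∀ᶠ n in atTop, ∀ r ∈ Icc a b, N n r ω =
      Real.exp (l ^ 2 * r / 2) * Real.cos (l * W r ω + C ω) := by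
    intro ω
    obtain ⟨B, hB⟩ := isCompact_Icc.exists_bound_of_continuousOn (hξ ω)
    obtain ⟨n₀, hn₀⟩ := exists_nat_ge B
    filter_upwards [eventually_ge_atTop n₀] with n hn r hr
    have hbd : ∀ q ∈ Icc s r, |ξ q ω| ≤ (n:ℝ) + 1 := fun q hq => by
      have i1 := hB q ⟨hq.1, (hq.2.trans hr.2).trans hb.le⟩
      rw [Real.norm_eq_abs] at i1
      have i2 : (n₀:ℝ) ≤ n := by exact_mod_cast hn
      linarith
    have hn0 : (0:ℝ) ≤ (n:ℝ) + 1 := by positivity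
    have e1 : ∫ q in s..r, genOf μ σ Φt Φx Φxx q (clampTo (-R n) (R n) (ξ q ω))
        = ∫ q in s..r, genOf μ σ Φt Φx Φxx q (ξ q ω) := by
      refine intervalIntegral.integral_congr fun q hq => ?_
      rw [uIcc_of_le (hsa.trans hr.1)] at hq
      have i1 : ξ q ω ∈ Icc (-R n) (R n) := abs_le.1 ((hbd q hq).trans (by simp only [hR]; linarith))
      simp only [clampTo_of_mem i1]
    simp only [hN, hW, noise]
    rw [e1, (hχ n).2.2.2.1 _ (hbd r ⟨hsa.trans hr.1, le_rfl⟩), one_mul]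
  have hlim : Tendsto (fun n => ∫ ω, Z ω * (N n b ω - N n a ω) ∂P) atTop
      (𝓝 (∫ ω, Z ω * (Real.exp (l ^ 2 * b / 2) * Real.cos (l * W b ω + C ω)
        - Real.exp (l ^ 2 * a / 2) * Real.cos (l * W a ω + C ω)) ∂P)) := by
    refine tendsto_integral_of_dominated_convergence
      (fun _ => K * (Real.exp (l ^ 2 * b / 2) + Real.exp (l ^ 2 * b / 2))) (fun n => ?_)
      (integrable_const _) (fun n => ae_of_all _ fun ω => ?_) (ae_of_all _ fun ω => ?_)
    · exact ((hZ.mono (F.le a) le_rfl).mul ((hNm n b hbI).sub (hNm n a haI))).aestronglyMeasurable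
    · rw [norm_mul]
      exact mul_le_mul (hK ω) ((abs_sub _ _).trans (add_le_add (hNle n b hbI ω) (hNle n a haI ω)))
        (norm_nonneg _) ((abs_nonneg _).trans (hK ω))
    · refine tendsto_const_nhds.congr' ?_
      filter_upwards [hNev ω] with n hn
      rw [hn b hbI, hn a haI]
  have hzero : ∫ ω, Z ω * (Real.exp (l ^ 2 * b / 2) * Real.cos (l * W b ω + C ω)
        - Real.exp (l ^ 2 * a / 2) * Real.cos (l * W a ω + C ω)) ∂P = 0 := by
    refine tendsto_nhds_unique hlim ?_
    refine squeeze_zero_norm happ ?_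
    have i1 : Tendsto (fun n : ℕ => A / ((n:ℝ) + 1)) atTop (𝓝 0) :=
      tendsto_const_div_atTop_nhds_zero_nat A |>.comp (tendsto_add_atTop_nat 1) |>.congr
        (fun n => by simp)
    simpa using ((((i1.const_mul (M + M ^ 2 + M * |l|)).const_mul 2).const_mul
      (Real.exp (l ^ 2 * b / 2))).mul_const (b - a)).const_mul K
  have hint : ∀ r ∈ Icc a b, Integrable (fun ω => Z ω * Real.cos (l * W r ω + C ω)) P := by
    intro r hr
    have i1 := (hmeas r ⟨hsa.trans hr.1, hr.2.trans_lt hb⟩).mono (F.le r) le_rfl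
    have i2 := hC.mono (F.le a) le_rfl
    refine Integrable.of_bound (C := K) (((hZ.mono (F.le a) le_rfl).mul
      (Real.measurable_cos.comp ((i1.const_mul l).add i2))).aestronglyMeasurable)
      (ae_of_all _ fun ω => ?_)
    rw [norm_mul]
    exact (mul_le_of_le_one_right (norm_nonneg _) (Real.abs_cos_le_one _)).trans (hK ω)
  have e2 : ∀ ω, Z ω * (Real.exp (l ^ 2 * b / 2) * Real.cos (l * W b ω + C ω)
        - Real.exp (l ^ 2 * a / 2) * Real.cos (l * W a ω + C ω))
      = Real.exp (l ^ 2 * b / 2) * (Z ω * Real.cos (l * W b ω + C ω))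
        - Real.exp (l ^ 2 * a / 2) * (Z ω * Real.cos (l * W a ω + C ω)) := fun ω => by ring
  simp_rw [e2] at hzero
  rw [integral_sub ((hint b hbI).const_mul _) ((hint a haI).const_mul _), integral_const_mul,
    integral_const_mul, sub_eq_zero] at hzero
  have e3 : Real.exp (-(l ^ 2 * (b - a) / 2))
      = Real.exp (l ^ 2 * a / 2) * (Real.exp (l ^ 2 * b / 2))⁻¹ := by
    rw [← Real.exp_neg, ← Real.exp_add]; congr 1; ring
  rw [e3]
  have := (Real.exp_pos (l ^ 2 * b / 2)).ne'
  field_simp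
  linarith

end levy

/-! ### The increments after time `t` are independent of the past, with a universal law -/

/-- The increments `W_u - W_t`, `u ∈ [t, T)`, as a random element of the path space. -/
def incr (W : ℝ → Ω → ℝ) (t T : ℝ) (ω : Ω) : Ico t T → ℝ := fun u => W u ω - W t ω

section law

variable [m : MeasurableSpace Ω] {P : Measure Ω} [IsProbabilityMeasure P]
  {F : Filtration ℝ m} {t T : ℝ} {W W' : ℝ → Ω → ℝ}

lemma LevyBM.measurable_incr (h : LevyBM P F t T W) (htT : t < T) : Measurable (incr W t T) :=
  measurable_pi_lambda _ fun u => ((h.meas u u.2).mono (F.le _) le_rfl).sub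
    ((h.meas t ⟨le_rfl, htT⟩).mono (F.le _) le_rfl)

/-- The joint characteristic function of finitely many increments factors over `𝔉_t`, and the factor
`κ` is the same for all Brownian motions. The induction removes the latest time; `u` and `l` carry
the increment that is being absorbed. -/
lemma exists_trig_factor (htT : t < T) (P : Measure Ω) [IsProbabilityMeasure P]
    (F : Filtration ℝ m) (J : Finset (Ico t T)) :
    ∀ u : ℝ, t ≤ u → u < T → (∀ j ∈ J, (j : ℝ) ≤ u) → ∀ (l : ℝ) (c : Ico t T → ℝ), ∃ κ : ℝ,
      ∀ W : ℝ → Ω → ℝ, LevyBM P F t T W → ∀ Z C : Ω → ℝ, Measurable[F t] Z → Measurable[F t] C →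
        (∃ K, ∀ ω, |Z ω| ≤ K) →
        ∫ ω, Z ω * Real.cos (l * (W u ω - W t ω) + ∑ j ∈ J, c j * incr W t T ω j + C ω) ∂P
          = κ * ∫ ω, Z ω * Real.cos (C ω) ∂P := by
  induction J using Finset.induction_on_max with
  | empty =>
    intro u htu huT _ l c
    refine ⟨Real.exp (-(l ^ 2 * (u - t) / 2)), fun W hW Z C hZ hC hK => ?_⟩
    have hWt := hW.meas t ⟨le_rfl, htT⟩
    have := hW.levy t u le_rfl htu huT l Z (fun ω => -(l * W t ω) + C ω) hZ
      ((hWt.const_mul l).neg.add hC) hK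
    simp only [add_neg_cancel_left] at this
    rw [← this]
    refine integral_congr_ae (ae_of_all _ fun ω => ?_)
    simp only [Finset.sum_empty]
    congr 2
    ring
  | insert a J hJ ih =>
    intro u htu huT hu l c
    obtain ⟨κ, hκ⟩ := ih a a.2.1 a.2.2 (fun j hj => (hJ j hj).le) (l + c a) c
    refine ⟨Real.exp (-(l ^ 2 * (u - a) / 2)) * κ, fun W hW Z C hZ hC hK => ?_⟩
    have haJ : a ∉ J := fun h => lt_irrefl _ (hJ a h)
    have hmono := F.mono a.2.1
    have hWt := (hW.meas t ⟨le_rfl, htT⟩).mono hmono le_rfl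
    have hWa := hW.meas a a.2
    have hsum : Measurable[F a] fun ω => ∑ j ∈ J, c j * incr W t T ω j :=
      Finset.measurable_fun_sum _ fun j hj =>
        (((hW.meas j j.2).mono (F.mono (hJ j hj).le) le_rfl).sub hWt).const_mul _
    have h1 := hW.levy a u a.2.1 (hu a (Finset.mem_insert_self _ _)) huT l Z
      (fun ω => -(l * W t ω) + c a * (W a ω - W t ω) + ∑ j ∈ J, c j * incr W t T ω j + C ω)
      (hZ.mono hmono le_rfl)
      ((((hWt.const_mul l).neg.add ((hWa.sub hWt).const_mul _)).add hsum).add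
        (hC.mono hmono le_rfl)) hK
    have h2 := hκ W hW Z C hZ hC hK
    rw [mul_assoc, ← h2]
    have e1 : ∀ ω, l * (W u ω - W t ω) + ∑ j ∈ insert a J, c j * incr W t T ω j + C ω
        = l * W u ω + (-(l * W t ω) + c a * (W a ω - W t ω)
          + ∑ j ∈ J, c j * incr W t T ω j + C ω) := fun ω => by
      rw [Finset.sum_insert haJ]
      simp only [incr]
      ring
    have e2 : ∀ ω, (l + c a) * (W a ω - W t ω) + ∑ j ∈ J, c j * incr W t T ω j + C ω
        = l * W a ω + (-(l * W t ω) + c a * (W a ω - W t ω)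
          + ∑ j ∈ J, c j * incr W t T ω j + C ω) := fun ω => by
      ring
    simp_rw [e1, e2]
    exact h1

/-- `exists_trig_factor` with phases `0` and `-π/2`, assembled into the characteristic function of the
finite-dimensional increments on an event of `𝔉_t`. -/
lemma exists_charFun_factor (htT : t < T) (P : Measure Ω) [IsProbabilityMeasure P]
    (F : Filtration ℝ m) (J : Finset (Ico t T)) (L : StrongDual ℝ (J → ℝ)) :
    ∃ κ : ℝ, ∀ W : ℝ → Ω → ℝ, LevyBM P F t T W → ∀ B : Set Ω, MeasurableSet[F t] B →
      charFunDual (((P.restrict B).map (incr W t T)).map J.restrict) L = κ * P.real B := by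
  obtain ⟨u, htu, huT, hu⟩ : ∃ u, t ≤ u ∧ u < T ∧ ∀ j ∈ J, (j : ℝ) ≤ u := by
    rcases J.eq_empty_or_nonempty with rfl | hne
    · exact ⟨t, le_rfl, htT, by simp⟩
    · exact ⟨J.max' hne, (J.max' hne).2.1, (J.max' hne).2.2, fun j hj => J.le_max' j hj⟩
  classical
  set c : Ico t T → ℝ := fun j => if h : j ∈ J then L (fun i => if ⟨j, h⟩ = i then 1 else 0) else 0
    with hc
  obtain ⟨κ, hκ⟩ := exists_trig_factor htT P F J u htu huT hu 0 c
  refine ⟨κ, fun W hW B hB => ?_⟩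
  have hBm : MeasurableSet B := F.le t B hB
  have hL : ∀ ω, L (J.restrict (incr W t T ω)) = ∑ j ∈ J, c j * incr W t T ω j := by
    intro ω
    have h1 := L.toLinearMap.pi_apply_eq_sum_univ (J.restrict (incr W t T ω))
    rw [← Finset.sum_coe_sort]
    refine h1.trans (Finset.sum_congr rfl fun j _ => ?_)
    simp only [hc, j.2, dif_pos, smul_eq_mul, Finset.restrict]
    rw [mul_comm]
    rfl
  have hZm : Measurable[F t] (B.indicator (fun _ => (1:ℝ))) := measurable_const.indicator hB
  have hZb : ∃ K, ∀ ω, |B.indicator (fun _ => (1:ℝ)) ω| ≤ K :=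
    ⟨1, fun ω => by by_cases h : ω ∈ B <;> simp [h]⟩
  set S : Ω → ℝ := fun ω => ∑ j ∈ J, c j * incr W t T ω j with hS
  have hind : ∀ f : Ω → ℝ, ∫ ω, B.indicator (fun _ => (1:ℝ)) ω * f ω ∂P = ∫ ω in B, f ω ∂P := by
    intro f
    rw [← integral_indicator hBm]
    refine integral_congr_ae (ae_of_all _ fun ω => ?_)
    by_cases h : ω ∈ B <;> simp [h]
  have hcos : ∫ ω in B, Real.cos (S ω) ∂P = κ * P.real B := by
    have := hκ W hW _ (fun _ => 0) hZm measurable_const hZb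
    simp only [zero_mul, zero_add, add_zero, Real.cos_zero] at this
    rw [hind, hind] at this
    simpa using this
  have hsin : ∫ ω in B, Real.sin (S ω) ∂P = 0 := by
    have := hκ W hW _ (fun _ => -(Real.pi / 2)) hZm measurable_const hZb
    simp only [zero_mul, zero_add, ← sub_eq_add_neg, Real.cos_sub_pi_div_two, Real.cos_neg,
      Real.cos_pi_div_two, mul_zero, integral_zero] at this
    rwa [hind] at this
  have hSm : Measurable S := Finset.measurable_fun_sum _ fun j _ =>
    ((measurable_pi_apply j).comp (hW.measurable_incr htT)).const_mul _
  rw [charFunDual_apply, integral_map (Finset.measurable_restrict J).aemeasurable (by fun_prop),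
    integral_map (hW.measurable_incr htT).aemeasurable (by
      have := (Finset.measurable_restrict (X := fun _ : Ico t T => ℝ) J)
      exact (Measurable.aestronglyMeasurable (by fun_prop)))]
  simp_rw [hL]
  have e1 : ∀ ω, Complex.exp ((S ω : ℂ) * Complex.I)
      = ((Real.cos (S ω) : ℝ) : ℂ) + ((Real.sin (S ω) : ℝ) : ℂ) * Complex.I := fun ω => by
    rw [Complex.exp_mul_I, Complex.ofReal_cos, Complex.ofReal_sin]
  change ∫ ω in B, Complex.exp ((S ω : ℂ) * Complex.I) ∂P = _
  simp_rw [e1]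
  have i1 : Integrable (fun ω => Real.cos (S ω)) (P.restrict B) :=
    Integrable.of_bound (C := 1) (Real.measurable_cos.comp hSm).aestronglyMeasurable
      (ae_of_all _ fun ω => Real.abs_cos_le_one _)
  have i2 : Integrable (fun ω => Real.sin (S ω)) (P.restrict B) :=
    Integrable.of_bound (C := 1) (Real.measurable_sin.comp hSm).aestronglyMeasurable
      (ae_of_all _ fun ω => Real.abs_sin_le_one _)
  rw [integral_add i1.ofReal (i2.ofReal.mul_const _), integral_mul_const,
    integral_complex_ofReal, integral_complex_ofReal, hcos, hsin]
  simp

/-- Any two Brownian motions have increments after `t` with the same law, even conditionally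
on an event of `𝔉_t` for the first of them. -/
theorem LevyBM.map_restrict_incr (htT : t < T) (hW : LevyBM P F t T W) (hW' : LevyBM P F t T W')
    {B : Set Ω} (hB : MeasurableSet[F t] B) :
    (P.restrict B).map (incr W t T) = P B • P.map (incr W' t T) := by
  have hm := hW.measurable_incr htT
  have hm' := hW'.measurable_incr htT
  have hf1 : IsFiniteMeasure ((P.restrict B).map (incr W t T)) := by infer_instance
  have hf3 : IsFiniteMeasure (P.map (incr W' t T)) := by infer_instance
  have hf2 : IsFiniteMeasure (P B • P.map (incr W' t T)) := Measure.smul_finite _ (measure_ne_top _ _)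
  refine IsProjectiveLimit.unique
    (P := fun J : Finset (Ico t T) => ((P.restrict B).map (incr W t T)).map J.restrict)
    (fun J => rfl) (fun J => ?_)
  refine Measure.ext_of_charFunDual (funext fun L => ?_)
  obtain ⟨κ, hκ⟩ := exists_charFun_factor htT P F J L
  have h1 := hκ W' hW' univ MeasurableSet.univ
  rw [Measure.restrict_univ, charFunDual_apply] at h1
  rw [hκ W hW B hB, Measure.map_smul, charFunDual_apply, integral_smul_measure, h1]
  simp [Measure.real, mul_comm]

/-- Joint law of an `𝔉_t`-measurable variable and the increments after `t`, on an event of `𝔉_t`. -/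
theorem LevyBM.map_prod_incr (htT : t < T) (hW : LevyBM P F t T W) (hW' : LevyBM P F t T W')
    {B : Set Ω} (hB : MeasurableSet[F t] B) {Y : Ω → ℝ} (hY : Measurable[F t] Y) :
    (P.restrict B).map (fun ω => (Y ω, incr W t T ω))
      = ((P.restrict B).map Y).prod (P.map (incr W' t T)) := by
  have hm := hW.measurable_incr htT
  have hm' := hW'.measurable_incr htT
  have hYm : Measurable Y := hY.mono (F.le t) le_rfl
  have hf3 : IsProbabilityMeasure (P.map (incr W' t T)) :=
    Measure.isProbabilityMeasure_map hm'.aemeasurable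
  refine (Measure.prod_eq fun A D hA hD => ?_).symm
  have hBY : MeasurableSet[F t] (B ∩ Y ⁻¹' A) := hB.inter (hY hA)
  have h1 := congrArg (fun ν => ν D) (hW.map_restrict_incr htT hW' hBY)
  simp only [Measure.smul_apply, smul_eq_mul] at h1
  rw [Measure.map_apply hm hD, Measure.restrict_apply (hm hD)] at h1
  rw [Measure.map_apply (hYm.prodMk hm) (hA.prod hD), Measure.restrict_apply
    ((hYm.prodMk hm) (hA.prod hD)), Measure.map_apply hYm hA, Measure.restrict_apply (hYm hA),
    inter_comm (Y ⁻¹' A), ← h1]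
  congr 1
  ext ω
  simp only [mem_inter_iff, mem_preimage, mem_prod]
  tauto

end law

/-! ### The Euler scheme recovers the path from its noise -/

/-- The Euler scheme of step `h` started from `y` at time `t` for `dY = b(r, Y) dr + dw`. -/
def euler (b : ℝ → ℝ → ℝ) (w : ℝ → ℝ) (t h y : ℝ) : ℕ → ℝ
  | 0 => y
  | k + 1 => euler b w t h y k + h * b (t + k * h) (euler b w t h y k)
      + (w (t + (k + 1) * h) - w (t + k * h))

/-- A path with continuous drift `γ r = b r (Y r)`, `b` being Lipschitz in space (but not assumed
continuous in time), is the limit of the Euler schemes driven by the same noise. -/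
lemma tendsto_euler {b : ℝ → ℝ → ℝ} {K : ℝ} (hb : ∀ r y y', |b r y - b r y'| ≤ K * |y - y'|)
    {t u : ℝ} (htu : t ≤ u) {w Y γ : ℝ → ℝ} (hγ : ContinuousOn γ (Icc t u))
    (hY : ∀ r ∈ Icc t u, Y r = Y t + (∫ q in t..r, γ q) + (w r - w t))
    (hγY : ∀ r ∈ Icc t u, γ r = b r (Y r)) :
    Tendsto (fun n : ℕ => euler b w t ((u - t) / (n + 1)) (Y t) (n + 1)) atTop (𝓝 (Y u)) := by
  have hK : 0 ≤ K := by
    have := (abs_nonneg _).trans (hb 0 1 0)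
    simpa using this
  have hut : 0 ≤ u - t := sub_nonneg.2 htu
  -- one step of the scheme, then a discrete Gronwall inequality
  have key : ∀ ε, 0 < ε → ∀ᶠ n : ℕ in atTop,
      |euler b w t ((u - t) / (n + 1)) (Y t) (n + 1) - Y u|
        ≤ (u - t) * ε * Real.exp (K * (u - t)) := by
    intro ε hε
    obtain ⟨δ, hδ, hu⟩ := Metric.uniformContinuousOn_iff.1
      (isCompact_Icc.uniformContinuousOn_of_continuous hγ) ε hε
    have hlim : Tendsto (fun n : ℕ => (u - t) / ((n : ℝ) + 1)) atTop (𝓝 0) := by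
      have := (tendsto_one_div_add_atTop_nhds_zero_nat (𝕜 := ℝ)).const_mul (u - t)
      simpa [div_eq_mul_inv] using this
    filter_upwards [hlim.eventually (gt_mem_nhds hδ)] with n hn
    set h : ℝ := (u - t) / (n + 1) with hh
    have hn1 : (0:ℝ) < n + 1 := by positivity
    have h0 : 0 ≤ h := div_nonneg hut hn1.le
    have hnh : (n + 1) * h = u - t := by rw [hh]; field_simp
    have hmem : ∀ k : ℕ, k ≤ n + 1 → t + k * h ∈ Icc t u := fun k hk => by
      have : (k : ℝ) ≤ n + 1 := by exact_mod_cast hk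
      have h2 := mul_le_mul_of_nonneg_right this h0
      have h3 : 0 ≤ (k : ℝ) * h := by positivity
      constructor <;> linarith
    have ind : ∀ k : ℕ, k ≤ n + 1 →
        |euler b w t h (Y t) k - Y (t + k * h)| ≤ k * (h * ε) * (1 + K * h) ^ k := by
      intro k
      induction k with
      | zero => intro _; simp [euler]
      | succ k ih =>
        intro hk
        have ih := ih (by omega)
        have m0 := hmem k (by omega)
        have m1 := hmem (k + 1) hk
        push_cast at m1 ⊢
        have hle : t + k * h ≤ t + (k + 1) * h := by nlinarith
        have hsub : Icc (t + k * h) (t + (k + 1) * h) ⊆ Icc t u := Icc_subset_Icc m0.1 m1.2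
        have i1 : IntervalIntegrable γ volume t (t + k * h) :=
          (hγ.mono (Icc_subset_Icc le_rfl m0.2)).intervalIntegrable_of_Icc m0.1
        have i2 : IntervalIntegrable γ volume (t + k * h) (t + (k + 1) * h) :=
          (hγ.mono hsub).intervalIntegrable_of_Icc hle
        have hYs : Y (t + (k + 1) * h) = Y (t + k * h) + (∫ q in (t + k * h)..(t + (k + 1) * h), γ q)
            + (w (t + (k + 1) * h) - w (t + k * h)) := by
          rw [hY _ m1, hY _ m0, ← intervalIntegral.integral_add_adjacent_intervals i1 i2]
          ring
        have hint : |(∫ q in (t + k * h)..(t + (k + 1) * h), γ q) - h * γ (t + k * h)| ≤ h * ε := by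
          have e : (∫ q in (t + k * h)..(t + (k + 1) * h), γ q) - h * γ (t + k * h)
              = ∫ q in (t + k * h)..(t + (k + 1) * h), (γ q - γ (t + k * h)) := by
            rw [intervalIntegral.integral_sub i2 (by simp), intervalIntegral.integral_const,
              smul_eq_mul]
            ring
          rw [e]
          have := intervalIntegral.norm_integral_le_of_norm_le_const (C := ε)
            (f := fun q => γ q - γ (t + k * h)) (a := t + k * h) (b := t + (k + 1) * h) ?_
          · rw [Real.norm_eq_abs] at this
            refine this.trans (le_of_eq ?_)
            rw [show t + (k + 1) * h - (t + k * h) = h by ring, abs_of_nonneg h0, mul_comm]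
          · intro q hq
            rw [uIoc_of_le hle] at hq
            have hq' := hsub ⟨hq.1.le, hq.2⟩
            have hd := hu q hq' _ m0 (by
              rw [Real.dist_eq, abs_of_nonneg (by linarith [hq.1])]
              have := hq.2
              linarith)
            rw [Real.dist_eq] at hd
            exact hd.le
        have hbk := hb (t + k * h) (euler b w t h (Y t) k) (Y (t + k * h))
        rw [← hγY _ m0] at hbk
        set e := euler b w t h (Y t) k - Y (t + k * h) with he
        have hdec : euler b w t h (Y t) (k + 1) - Y (t + (k + 1) * h)
            = e + h * (b (t + k * h) (euler b w t h (Y t) k) - γ (t + k * h))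
              - ((∫ q in (t + k * h)..(t + (k + 1) * h), γ q) - h * γ (t + k * h)) := by
          rw [hYs, euler, he]
          ring
        rw [hdec]
        have hp : 1 ≤ (1 + K * h) ^ (k + 1) := one_le_pow₀ (by nlinarith [mul_nonneg hK h0])
        have hhε : 0 ≤ h * ε := by positivity
        calc _ ≤ |e + h * (b (t + k * h) (euler b w t h (Y t) k) - γ (t + k * h))|
                + |(∫ q in (t + k * h)..(t + (k + 1) * h), γ q) - h * γ (t + k * h)| := abs_sub _ _
          _ ≤ (|e| + |h * (b (t + k * h) (euler b w t h (Y t) k) - γ (t + k * h))|) + h * ε :=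
              add_le_add (abs_add_le _ _) hint
          _ ≤ (|e| + h * (K * |e|)) + h * ε := by
              rw [abs_mul, abs_of_nonneg h0]
              gcongr
          _ = (1 + K * h) * |e| + h * ε := by ring
          _ ≤ (1 + K * h) * (k * (h * ε) * (1 + K * h) ^ k) + h * ε * (1 + K * h) ^ (k + 1) := by
              have hK1 : 0 ≤ 1 + K * h := by positivity
              exact add_le_add (mul_le_mul_of_nonneg_left ih hK1) (le_mul_of_one_le_right hhε hp)
          _ = (k + 1) * (h * ε) * (1 + K * h) ^ (k + 1) := by ring
    have hfin := ind (n + 1) le_rfl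
    push_cast at hfin
    rw [hnh, show t + (u - t) = u by ring] at hfin
    refine hfin.trans ?_
    rw [show ((n:ℝ) + 1) * (h * ε) = (u - t) * ε by rw [← hnh]; ring]
    refine mul_le_mul_of_nonneg_left ?_ (by positivity)
    calc (1 + K * h) ^ (n + 1) ≤ (Real.exp (K * h)) ^ (n + 1) := by
          gcongr
          linarith [Real.add_one_le_exp (K * h)]
      _ = Real.exp (K * (u - t)) := by
          rw [← Real.exp_nat_mul, ← hnh]
          push_cast
          ring_nf
  rw [Metric.tendsto_atTop']
  intro ε hε
  have hC : 0 < (u - t) * Real.exp (K * (u - t)) + 1 := by positivity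
  obtain ⟨N, hN⟩ := eventually_atTop.1 (key (ε / ((u - t) * Real.exp (K * (u - t)) + 1))
    (by positivity))
  refine ⟨N, fun n hn => ?_⟩
  rw [Real.dist_eq]
  refine (hN n hn.le).trans_lt ?_
  rw [show (u - t) * (ε / ((u - t) * Real.exp (K * (u - t)) + 1)) * Real.exp (K * (u - t))
    = ε * ((u - t) * Real.exp (K * (u - t)) / ((u - t) * Real.exp (K * (u - t)) + 1)) by ring]
  have : (u - t) * Real.exp (K * (u - t)) / ((u - t) * Real.exp (K * (u - t)) + 1) < 1 := by
    rw [div_lt_one hC]; linarith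
  nlinarith

/-- Extension by zero of a path on `[t, T)`. -/
def extPath {t T : ℝ} (w : Ico t T → ℝ) (r : ℝ) : ℝ :=
  open Classical in if h : r ∈ Ico t T then w ⟨r, h⟩ else 0

lemma extPath_of_mem {t T r : ℝ} (hr : r ∈ Ico t T) (w : Ico t T → ℝ) :
    extPath w r = w ⟨r, hr⟩ := dif_pos hr

lemma measurable_extPath {t T : ℝ} (r : ℝ) :
    Measurable fun w : Ico t T → ℝ => extPath w r := by
  by_cases hr : r ∈ Ico t T
  · simp_rw [extPath_of_mem hr]
    exact measurable_pi_apply _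
  · simp only [extPath, dif_neg hr]
    exact measurable_const

lemma measurable_euler {b : ℝ → ℝ → ℝ} (hb : ∀ r, Continuous (b r)) {T : ℝ} (t h : ℝ) (k : ℕ) :
    Measurable fun p : ℝ × (Ico t T → ℝ) => euler b (extPath p.2) t h p.1 k := by
  induction k with
  | zero => exact measurable_fst
  | succ k ih =>
    exact (ih.add (((hb _).measurable.comp ih).const_mul h)).add
      (((measurable_extPath _).comp measurable_snd).sub ((measurable_extPath _).comp measurable_snd))

/-! ### Non-crossing is an event of the transformed position and the future increments -/

/-- A continuous function is positive on `[a, b]` exactly when it has a uniform positive lower bound on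
a countable dense subset; the uniform margin makes the condition measurable in `f`. -/
lemma forall_pos_iff {f : ℝ → ℝ} {a b : ℝ} (hab : a ≤ b) (hf : ContinuousOn f (Icc a b)) :
    (∀ u ∈ Icc a b, 0 < f u) ↔
      ∃ k : ℕ, ∀ i : ℕ, 1 / ((k : ℝ) + 1) ≤ f (clampTo a b (TopologicalSpace.denseSeq ℝ i)) := by
  constructor
  · intro h
    obtain ⟨u, hu, hmin⟩ := isCompact_Icc.exists_isMinOn (nonempty_Icc.2 hab) hf
    obtain ⟨k, hk⟩ := exists_nat_one_div_lt (h u hu)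
    exact ⟨k, fun i => hk.le.trans (hmin (clampTo_mem hab _))⟩
  · rintro ⟨k, hk⟩ u hu
    have hc : Continuous fun r => f (clampTo a b r) :=
      hf.comp_continuous (continuous_clampTo a b) (clampTo_mem hab)
    have h1 : 1 / ((k : ℝ) + 1) ≤ f (clampTo a b u) := by
      refine (TopologicalSpace.denseRange_denseSeq ℝ).induction_on (p := fun r => 1 / ((k : ℝ) + 1) ≤ f (clampTo a b r))
        u (isClosed_le continuous_const hc) hk
    rw [clampTo_of_mem hu] at h1
    exact lt_of_lt_of_le (by positivity) h1

section lamperti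

variable {T M L : ℝ} {μ σ Φ Φt Φx Φxx : ℝ → ℝ → ℝ}

lemma LampertiData.strictMono (h : LampertiData T M L μ σ Φ Φt Φx Φxx)
    (hσ : ∀ t ∈ Ioo 0 T, ∀ x, 0 < σ t x) {t : ℝ} (ht : t ∈ Ioo 0 T) : StrictMono (Φ t) := by
  refine strictMono_of_deriv_pos fun x => ?_
  rw [(h.hasDerivAt_x t ht x).deriv]
  have h1 := h.sigma_mul t ht x
  exact pos_of_mul_pos_right (by rw [h1]; exact one_pos) (hσ t ht x).le

lemma LampertiData.surjective (h : LampertiData T M L μ σ Φ Φt Φx Φxx)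
    (hσ : ∀ t ∈ Ioo 0 T, ∀ x, 0 < σ t x) {t : ℝ} (ht : t ∈ Ioo 0 T) :
    Function.Surjective (Φ t) := by
  have hm := (h.strictMono hσ ht).monotone
  have hM := h.M_pos
  have key : ∀ x y, x ≤ y → (y - x) / M ≤ Φ t y - Φ t x := fun x y hxy => by
    have := h.expand t ht y x
    rw [abs_of_nonneg (sub_nonneg.2 hxy), abs_of_nonneg (sub_nonneg.2 (hm hxy))] at this
    rwa [div_le_iff₀' hM]
  refine (continuous_slice h.cont ht).surjective ?_ ?_
  · refine tendsto_atTop_mono' _ (f₁ := fun x => x / M + Φ t 0) ?_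
      (tendsto_atTop_add_const_right _ _ (tendsto_id.atTop_div_const hM))
    filter_upwards [eventually_ge_atTop 0] with x hx
    have := key 0 x hx
    rw [sub_zero] at this
    linarith
  · refine tendsto_atBot_mono' _ (f₁ := fun x => x / M + Φ t 0) ?_
      (tendsto_atBot_add_const_right _ _ (tendsto_id.atBot_div_const hM))
    filter_upwards [eventually_le_atBot 0] with x hx
    have := key x 0 hx
    rw [zero_sub, neg_div] at this
    linarith

/-- The drift of `Φ(r, X_r)` as a function of the transformed position `y = Φ(r, X_r)`; zero outside
the time interval `(0, T)`. -/
def transformedDrift (T : ℝ) (μ σ Φ Φt Φx Φxx : ℝ → ℝ → ℝ) (r y : ℝ) : ℝ :=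
  open Classical in
  if r ∈ Ioo 0 T then genOf μ σ Φt Φx Φxx r (Function.invFun (Φ r) y) else 0

lemma LampertiData.transformedDrift_apply (h : LampertiData T M L μ σ Φ Φt Φx Φxx)
    (hσ : ∀ t ∈ Ioo 0 T, ∀ x, 0 < σ t x) {t : ℝ} (ht : t ∈ Ioo 0 T) (x : ℝ) :
    transformedDrift T μ σ Φ Φt Φx Φxx t (Φ t x) = genOf μ σ Φt Φx Φxx t x := by
  rw [transformedDrift, if_pos ht, Function.leftInverse_invFun (h.strictMono hσ ht).injective x]

lemma LampertiData.transformedDrift_lip (h : LampertiData T M L μ σ Φ Φt Φx Φxx)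
    (hσ : ∀ t ∈ Ioo 0 T, ∀ x, 0 < σ t x) (r y y' : ℝ) :
    |transformedDrift T μ σ Φ Φt Φx Φxx r y - transformedDrift T μ σ Φ Φt Φx Φxx r y'|
      ≤ |L| * M * |y - y'| := by
  by_cases hr : r ∈ Ioo 0 T
  · obtain ⟨x, rfl⟩ := h.surjective hσ hr y
    obtain ⟨x', rfl⟩ := h.surjective hσ hr y'
    rw [h.transformedDrift_apply hσ hr, h.transformedDrift_apply hσ hr, mul_assoc]
    refine (h.lip r hr x x').trans ?_
    exact mul_le_mul (le_abs_self L) (h.expand r hr x x') (abs_nonneg _) (abs_nonneg _)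
  · simp only [transformedDrift, if_neg hr, sub_zero, abs_zero]
    have := h.M_pos
    positivity

lemma LampertiData.continuous_transformedDrift (h : LampertiData T M L μ σ Φ Φt Φx Φxx)
    (hσ : ∀ t ∈ Ioo 0 T, ∀ x, 0 < σ t x) (r : ℝ) :
    Continuous (transformedDrift T μ σ Φ Φt Φx Φxx r) :=
  (LipschitzWith.of_dist_le_mul (K := (|L| * M).toNNReal) fun y y' => by
    rw [Real.dist_eq, Real.dist_eq, Real.coe_toNNReal _ (by have := h.M_pos; positivity)]
    exact h.transformedDrift_lip hσ r y y').continuous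

/-- The pairs (transformed position at time `t`, increments of the noise after `t`) for which the path
rebuilt by the Euler scheme stays below `g` on `[t, T)`. The `j`-th clause controls the interval
`[t, T - (T - t) / (j + 1)]`. -/
def survivalSet (T : ℝ) (b Φ : ℝ → ℝ → ℝ) (g : ℝ → ℝ) (t : ℝ) : Set (ℝ × (Ico t T → ℝ)) :=
  {p | ∀ j : ℕ, ∃ k : ℕ, ∀ i : ℕ, ∃ N : ℕ, ∀ n ≥ N,
    euler b (extPath p.2) t
        ((clampTo t (T - (T - t) / (j + 1)) (TopologicalSpace.denseSeq ℝ i) - t) / (n + 1)) p.1 (n + 1)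
      ≤ Φ (clampTo t (T - (T - t) / (j + 1)) (TopologicalSpace.denseSeq ℝ i))
          (g (clampTo t (T - (T - t) / (j + 1)) (TopologicalSpace.denseSeq ℝ i))) - 1 / ((k : ℝ) + 1)}

lemma measurableSet_survivalSet {b : ℝ → ℝ → ℝ} (hb : ∀ r, Continuous (b r)) (g : ℝ → ℝ) (t : ℝ) :
    MeasurableSet (survivalSet T b Φ g t) := by
  simp only [survivalSet, ofPred_forall, ofPred_exists]
  refine MeasurableSet.iInter fun j => MeasurableSet.iUnion fun k => MeasurableSet.iInter fun i =>
    MeasurableSet.iUnion fun N => MeasurableSet.iInter fun n => MeasurableSet.iInter fun _ => ?_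
  exact measurableSet_le (measurable_euler hb t _ _) measurable_const

/-- The path is rebuilt from its position at time `t` and the later increments of its noise. -/
lemma LampertiData.tendsto_path (h : LampertiData T M L μ σ Φ Φt Φx Φxx)
    (hσ : ∀ t ∈ Ioo 0 T, ∀ x, 0 < σ t x) {s t u : ℝ} (hs : 0 < s) (hst : s ≤ t) (hu : u ∈ Ico t T)
    {ξ : ℝ → Ω → ℝ} {ω : Ω} (hξ : ContinuousOn (fun u => ξ u ω) (Icc s T)) :
    Tendsto (fun n : ℕ => euler (transformedDrift T μ σ Φ Φt Φx Φxx)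
      (extPath (incr (noise μ σ Φ Φt Φx Φxx s ξ) t T ω)) t ((u - t) / (n + 1)) (Φ t (ξ t ω)) (n + 1))
      atTop (𝓝 (Φ u (ξ u ω))) := by
  have hc : ContinuousOn (fun r => genOf μ σ Φt Φx Φxx r (ξ r ω)) (Icc s u) :=
    continuousOn_along hs hu.2 h.cont_beta (hξ.mono (Icc_subset_Icc_right hu.2.le))
  refine tendsto_euler (h.transformedDrift_lip hσ) hu.1 (Y := fun r => Φ r (ξ r ω))
    (hc.mono (Icc_subset_Icc_left hst)) (fun r hr => ?_) (fun r hr => ?_)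
  · have hr' : r ∈ Ico t T := ⟨hr.1, hr.2.trans_lt hu.2⟩
    rw [extPath_of_mem hr', extPath_of_mem (⟨le_rfl, hu.1.trans_lt hu.2⟩ : t ∈ Ico t T)]
    simp only [incr, noise]
    have i1 : IntervalIntegrable (fun r => genOf μ σ Φt Φx Φxx r (ξ r ω)) volume s t :=
      (hc.mono (Icc_subset_Icc_right hu.1)).intervalIntegrable_of_Icc hst
    have i2 : IntervalIntegrable (fun r => genOf μ σ Φt Φx Φxx r (ξ r ω)) volume t r :=
      (hc.mono (Icc_subset_Icc hst hr.2)).intervalIntegrable_of_Icc hr.1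
    rw [← intervalIntegral.integral_add_adjacent_intervals i1 i2]
    ring
  · exact (h.transformedDrift_apply hσ ⟨hs.trans_le (hst.trans hr.1), hr.2.trans_lt hu.2⟩ _).symm

/-- The path stays below `g` after time `t` exactly when the pair (transformed position at time `t`,
later increments of the noise) lies in `survivalSet`. -/
theorem LampertiData.survives_iff (h : LampertiData T M L μ σ Φ Φt Φx Φxx)
    (hσ : ∀ t ∈ Ioo 0 T, ∀ x, 0 < σ t x) {g : ℝ → ℝ} (hg : ContinuousOn g (Icc 0 T))
    {s t : ℝ} (hs : 0 < s) (hst : s ≤ t) (htT : t < T)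
    {ξ : ℝ → Ω → ℝ} {ω : Ω} (hξ : ContinuousOn (fun u => ξ u ω) (Icc s T)) :
    (∀ u ∈ Ico t T, ξ u ω < g u) ↔
      (Φ t (ξ t ω), incr (noise μ σ Φ Φt Φx Φxx s ξ) t T ω)
        ∈ survivalSet T (transformedDrift T μ σ Φ Φt Φx Φxx) Φ g t := by
  have hTt : 0 < T - t := sub_pos.2 htT
  have hj : ∀ j : ℕ, t ≤ T - (T - t) / (j + 1) ∧ T - (T - t) / (j + 1) < T := fun j => by
    have h1 : (T - t) / ((j : ℝ) + 1) ≤ T - t :=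
      div_le_self hTt.le (by have : (0:ℝ) ≤ j := by positivity
                             linarith)
    have h2 : 0 < (T - t) / ((j : ℝ) + 1) := by positivity
    constructor <;> linarith
  have hex : (∀ u ∈ Ico t T, ξ u ω < g u) ↔
      ∀ j : ℕ, ∀ u ∈ Icc t (T - (T - t) / (j + 1)), 0 < Φ u (g u) - Φ u (ξ u ω) := by
    have hpt : ∀ u ∈ Ico t T, (ξ u ω < g u ↔ 0 < Φ u (g u) - Φ u (ξ u ω)) := fun u hu => by
      rw [sub_pos, (h.strictMono hσ ⟨hs.trans_le (hst.trans hu.1), hu.2⟩).lt_iff_lt]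
    constructor
    · intro H j u hu
      have hu' : u ∈ Ico t T := ⟨hu.1, hu.2.trans_lt (hj j).2⟩
      exact (hpt u hu').1 (H u hu')
    · intro H u hu
      have hpos : 0 < (T - u) / (T - t) := div_pos (sub_pos.2 hu.2) hTt
      obtain ⟨j, hjj⟩ := exists_nat_one_div_lt hpos
      refine (hpt u hu).2 (H j u ⟨hu.1, ?_⟩)
      rw [lt_div_iff₀ hTt, one_div_mul_eq_div] at hjj
      linarith
  rw [hex]
  refine forall_congr' fun j => ?_
  set b := T - (T - t) / ((j : ℝ) + 1) with hb
  have hcont : ContinuousOn (fun u => Φ u (g u) - Φ u (ξ u ω)) (Icc t b) := by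
    have hst' : Icc t b ⊆ Icc s b := Icc_subset_Icc_left hst
    have h0 : 0 < t := hs.trans_le hst
    refine (continuousOn_along h0 (hj j).2 h.cont (hg.mono ?_)).sub
      (continuousOn_along h0 (hj j).2 h.cont (hξ.mono ?_))
    · exact Icc_subset_Icc h0.le (hj j).2.le
    · exact Icc_subset_Icc hst (hj j).2.le
  rw [forall_pos_iff (hj j).1 hcont]
  have hlim := fun i : ℕ => h.tendsto_path hσ hs hst (ω := ω)
    (u := clampTo t b (TopologicalSpace.denseSeq ℝ i))
    ⟨(clampTo_mem (hj j).1 _).1, (clampTo_mem (hj j).1 _).2.trans_lt (hj j).2⟩ hξ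
  constructor
  · rintro ⟨k, hk⟩
    -- half of the margin is left to absorb the error of the Euler scheme
    refine ⟨2 * k + 1, fun i => ?_⟩
    have h1 := hk i
    have hlt : 1 / (((2 * k + 1 : ℕ) : ℝ) + 1) < 1 / ((k : ℝ) + 1) := by
      push_cast
      apply one_div_lt_one_div_of_lt (by positivity)
      have : (0:ℝ) ≤ k := by positivity
      linarith
    have h2 := (hlim i).eventually_lt_const (u := Φ (clampTo t b (TopologicalSpace.denseSeq ℝ i))
      (g (clampTo t b (TopologicalSpace.denseSeq ℝ i))) - 1 / (((2 * k + 1 : ℕ) : ℝ) + 1)) (by linarith)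
    obtain ⟨N, hN⟩ := eventually_atTop.1 h2
    exact ⟨N, fun n hn => (hN n hn).le⟩
  · rintro ⟨k, hk⟩
    refine ⟨k, fun i => ?_⟩
    obtain ⟨N, hN⟩ := hk i
    have := le_of_tendsto (hlim i) (eventually_atTop.2 ⟨N, hN⟩)
    linarith

end lamperti

/-! ### The Markov property at a fixed time -/

section markov

variable [m : MeasurableSpace Ω] {P : Measure Ω} [IsProbabilityMeasure P] {F : Filtration ℝ m}
  {T M L : ℝ} {μ σ Φ Φt Φx Φxx : ℝ → ℝ → ℝ} {g : ℝ → ℝ} {X : ℝ → ℝ → ℝ → Ω → ℝ}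

/-- The non-crossing probability from `(t, y)` is the mass, under the law of the increments of any
Brownian motion, of a section of `survivalSet`. -/
lemma vF_eq (h : LampertiData T M L μ σ Φ Φt Φx Φxx) (hσ : ∀ t ∈ Ioo 0 T, ∀ x, 0 < σ t x)
    (hg : ContinuousOn g (Icc 0 T)) (hXad : ∀ s x : ℝ, Adapted F (X s x))
    (hXcont : ∀ s x : ℝ, ∀ ω, ContinuousOn (fun u => X s x u ω) (Icc s T))
    (hXinit : ∀ s x : ℝ, ∀ ω, X s x s ω = x) (hXmp : SolvesMP T μ σ P F X)
    {t : ℝ} (ht : t ∈ Ioo 0 T) {W : ℝ → Ω → ℝ} (hW : LevyBM P F t T W) (y : ℝ) :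
    P {ω | ∀ u ∈ Ico t T, X t y u ω < g u}
      = P.map (incr W t T) (Prod.mk (Φ t y) ⁻¹'
          survivalSet T (transformedDrift T μ σ Φ Φt Φx Φxx) Φ g t) := by
  have hS := measurableSet_survivalSet (T := T) (Φ := Φ) (h.continuous_transformedDrift hσ) g t
  have hy : LevyBM P F t T (noise μ σ Φ Φt Φx Φxx t (X t y)) :=
    levyBM_noise h ht.1 (hXcont t y) (fun u => hXad t y u)
      (fun f hf hc => hXmp t ⟨ht.1.le, ht.2.le⟩ y f hf hc)
  have h1 := hy.map_restrict_incr ht.2 hW (MeasurableSet.univ (α := Ω))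
  rw [Measure.restrict_univ, measure_univ, one_smul] at h1
  rw [← h1, Measure.map_apply (hy.measurable_incr ht.2) (measurable_prodMk_left hS)]
  congr 1
  ext ω
  have := h.survives_iff hσ hg ht.1 le_rfl ht.2 (hXcont t y ω)
  rw [hXinit] at this
  exact this

lemma measurable_vF (h : LampertiData T M L μ σ Φ Φt Φx Φxx) (hσ : ∀ t ∈ Ioo 0 T, ∀ x, 0 < σ t x)
    (hg : ContinuousOn g (Icc 0 T)) (hXad : ∀ s x : ℝ, Adapted F (X s x))
    (hXcont : ∀ s x : ℝ, ∀ ω, ContinuousOn (fun u => X s x u ω) (Icc s T))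
    (hXinit : ∀ s x : ℝ, ∀ ω, X s x s ω = x) (hXmp : SolvesMP T μ σ P F X)
    {t : ℝ} (ht : t ∈ Ioo 0 T) : Measurable (vF T g P X t) := by
  have hW : LevyBM P F t T (noise μ σ Φ Φt Φx Φxx t (X t 0)) :=
    levyBM_noise h ht.1 (hXcont t 0) (fun u => hXad t 0 u)
      (fun f hf hc => hXmp t ⟨ht.1.le, ht.2.le⟩ 0 f hf hc)
  have hS := measurableSet_survivalSet (T := T) (Φ := Φ) (h.continuous_transformedDrift hσ) g t
  have : IsProbabilityMeasure (P.map (incr (noise μ σ Φ Φt Φx Φxx t (X t 0)) t T)) :=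
    Measure.isProbabilityMeasure_map (hW.measurable_incr ht.2).aemeasurable
  have e : vF T g P X t = fun y => (P.map (incr (noise μ σ Φ Φt Φx Φxx t (X t 0)) t T)
      (Prod.mk (Φ t y) ⁻¹' survivalSet T (transformedDrift T μ σ Φ Φt Φx Φxx) Φ g t)).toReal :=
    funext fun y => congrArg ENNReal.toReal (vF_eq h hσ hg hXad hXcont hXinit hXmp ht hW y)
  rw [e]
  exact ((measurable_measure_prodMk_left hS).comp
    (continuous_slice h.cont ht).measurable).ennreal_toReal

/-- Markov property: on an event of `𝔉_t`, the conditional probability of staying below `g` after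
time `t` is `v(t, X_t)`. -/
theorem measure_inter_survives (h : LampertiData T M L μ σ Φ Φt Φx Φxx)
    (hσ : ∀ t ∈ Ioo 0 T, ∀ x, 0 < σ t x)
    (hg : ContinuousOn g (Icc 0 T)) (hXad : ∀ s x : ℝ, Adapted F (X s x))
    (hXcont : ∀ s x : ℝ, ∀ ω, ContinuousOn (fun u => X s x u ω) (Icc s T))
    (hXinit : ∀ s x : ℝ, ∀ ω, X s x s ω = x) (hXmp : SolvesMP T μ σ P F X)
    {s t x : ℝ} (hs : 0 < s) (hst : s ≤ t) (htT : t < T) {B : Set Ω} (hB : MeasurableSet[F t] B) :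
    MeasurableSet {ω | ∀ u ∈ Ico t T, X s x u ω < g u} ∧
    P.real (B ∩ {ω | ∀ u ∈ Ico t T, X s x u ω < g u}) = ∫ ω in B, vF T g P X t (X s x t ω) ∂P := by
  have ht : t ∈ Ioo 0 T := ⟨hs.trans_le hst, htT⟩
  have hW : LevyBM P F t T (noise μ σ Φ Φt Φx Φxx s (X s x)) :=
    (levyBM_noise h hs (hXcont s x) (fun u => hXad s x u)
      (fun f hf hc => hXmp s ⟨hs.le, (hst.trans_lt htT).le⟩ x f hf hc)).mono hst
  have hS := measurableSet_survivalSet (T := T) (Φ := Φ) (h.continuous_transformedDrift hσ) g t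
  have hBm := F.le t B hB
  set S := survivalSet T (transformedDrift T μ σ Φ Φt Φx Φxx) Φ g t with hSdef
  set Y : Ω → ℝ := fun ω => Φ t (X s x t ω) with hY
  have hYt : Measurable[F t] Y := (continuous_slice h.cont ht).measurable.comp (hXad s x t)
  have hYm : Measurable Y := hYt.mono (F.le t) le_rfl
  have hpair : Measurable fun ω => (Y ω, incr (noise μ σ Φ Φt Φx Φxx s (X s x)) t T ω) :=
    hYm.prodMk (hW.measurable_incr htT)
  have hA : {ω | ∀ u ∈ Ico t T, X s x u ω < g u}
      = (fun ω => (Y ω, incr (noise μ σ Φ Φt Φx Φxx s (X s x)) t T ω)) ⁻¹' S :=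
    Set.ext fun ω => h.survives_iff hσ hg hs hst htT (hXcont s x ω)
  have hprob : IsProbabilityMeasure (P.map (incr (noise μ σ Φ Φt Φx Φxx s (X s x)) t T)) :=
    Measure.isProbabilityMeasure_map (hW.measurable_incr ht.2).aemeasurable
  have hjoint := congrArg (fun ν => ν S) (hW.map_prod_incr htT hW hB hYt)
  rw [Measure.map_apply hpair hS, ← hA, Measure.restrict_apply (hA ▸ hpair hS),
    Measure.prod_apply hS, lintegral_map (measurable_measure_prodMk_left hS) hYm] at hjoint
  refine ⟨hA ▸ hpair hS, ?_⟩
  have hv : ∀ ω, vF T g P X t (X s x t ω) = (P.map (incr (noise μ σ Φ Φt Φx Φxx s (X s x)) t T)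
      (Prod.mk (Y ω) ⁻¹' S)).toReal := fun ω =>
    congrArg ENNReal.toReal (vF_eq h hσ hg hXad hXcont hXinit hXmp ht hW _)
  simp_rw [hv]
  have hmeas : Measurable fun ω => P.map (incr (noise μ σ Φ Φt Φx Φxx s (X s x)) t T)
      (Prod.mk (Y ω) ⁻¹' S) := (measurable_measure_prodMk_left hS).comp hYm
  rw [integral_toReal hmeas.aemeasurable (ae_of_all _ fun ω => measure_lt_top _ _), ← hjoint, inter_comm, Measure.real]

end markov

/-! ### The stopped process -/

/-- Survival up to time `t` is an event of `𝔉_t`. -/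
lemma measurableSet_survives_Icc [m : MeasurableSpace Ω] {F : Filtration ℝ m} {s t : ℝ} (hst : s ≤ t)
    {g : ℝ → ℝ} {ξ : ℝ → Ω → ℝ} (hg : ContinuousOn g (Icc s t))
    (hξ : ∀ ω, ContinuousOn (fun u => ξ u ω) (Icc s t)) (had : ∀ u, Measurable[F u] (ξ u)) :
    MeasurableSet[F t] {ω | ∀ u ∈ Icc s t, ξ u ω < g u} := by
  have e : {ω | ∀ u ∈ Icc s t, ξ u ω < g u} = {ω | ∃ k : ℕ, ∀ i : ℕ, 1 / ((k : ℝ) + 1)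
      ≤ g (clampTo s t (TopologicalSpace.denseSeq ℝ i))
        - ξ (clampTo s t (TopologicalSpace.denseSeq ℝ i)) ω} := by
    ext ω
    have := forall_pos_iff hst (hg.sub (hξ ω))
    simp only [Pi.sub_apply, sub_pos] at this
    exact this
  rw [e]
  simp only [ofPred_forall, ofPred_exists]
  refine MeasurableSet.iUnion fun k => MeasurableSet.iInter fun i => ?_
  exact measurableSet_le measurable_const (measurable_const.sub
    ((had _).mono (F.mono (clampTo_mem hst _).2) le_rfl))

section stopping

variable {T : ℝ} {g : ℝ → ℝ} {X : ℝ → ℝ → ℝ → Ω → ℝ} {s t x : ℝ} {ω : Ω}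

/-- A path started at or above the boundary has crossed it. -/
lemma vF_eq_zero [MeasurableSpace Ω] {P : Measure Ω} {y : ℝ} (htT : t < T) (hXinit : ∀ s x : ℝ, ∀ ω, X s x s ω = x) (hy : g t ≤ y) :
    vF T g P X t y = 0 := by
  have : {ω | ∀ u ∈ Ico t T, X t y u ω < g u} = ∅ := by
    refine eq_empty_of_forall_notMem fun ω hω => ?_
    have := hω t ⟨le_rfl, htT⟩
    rw [hXinit] at this
    exact this.not_ge hy
  rw [vF, this, measure_empty, ENNReal.toReal_zero]

lemma tauF_bddBelow (hsT : s ≤ T) :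
    BddBelow ({t | t ∈ Icc s T ∧ g t ≤ X s x t ω} ∪ {T}) :=
  ⟨s, by rintro r (hr | hr)
         · exact hr.1.1
         · rw [mem_singleton_iff.1 hr]; exact hsT⟩

/-- At a time `t < T` the stopped process is `v(t, X_t)` as long as the path has not crossed `g`, and
zero afterwards. -/
lemma stopped_eq [MeasurableSpace Ω] {P : Measure Ω} (hst : s ≤ t) (htT : t < T) (hg : ContinuousOn g (Icc s T))
    (hXcont : ContinuousOn (fun u => X s x u ω) (Icc s T))
    (hXinit : ∀ s x : ℝ, ∀ ω, X s x s ω = x) :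
    vF T g P X (min t (tauF T g X s x ω)) (X s x (min t (tauF T g X s x ω)) ω)
      = {ω | ∀ u ∈ Icc s t, X s x u ω < g u}.indicator (fun ω => vF T g P X t (X s x t ω)) ω := by
  have hsT := hst.trans htT.le
  have hbdd := tauF_bddBelow (g := g) (X := X) (x := x) (ω := ω) hsT
  by_cases hB : ω ∈ {ω | ∀ u ∈ Icc s t, X s x u ω < g u}
  · rw [indicator_of_mem hB]
    have : t ≤ tauF T g X s x ω := by
      refine le_csInf ⟨T, Or.inr rfl⟩ ?_
      rintro r (hr | hr)
      · by_contra! hlt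
        exact (hB r ⟨hr.1.1, hlt.le⟩).not_ge hr.2
      · rw [mem_singleton_iff.1 hr]; exact htT.le
    rw [min_eq_left this]
  · rw [indicator_of_notMem hB]
    simp only [mem_ofPred_eq, not_forall, not_lt] at hB
    obtain ⟨u, hu, hgu⟩ := hB
    have hτt : tauF T g X s x ω ≤ t :=
      (csInf_le hbdd (Or.inl ⟨⟨hu.1, hu.2.trans htT.le⟩, hgu⟩)).trans hu.2
    have hclosed : IsClosed ({t | t ∈ Icc s T ∧ g t ≤ X s x t ω} ∪ {T}) := by
      refine IsClosed.union ?_ isClosed_singleton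
      exact isClosed_Icc.isClosed_le hg hXcont
    have hmem : tauF T g X s x ω ∈ {t | t ∈ Icc s T ∧ g t ≤ X s x t ω} ∪ {T} :=
      hclosed.csInf_mem ⟨T, Or.inr rfl⟩ hbdd
    rw [min_eq_right hτt]
    rcases hmem with hmem | hmem
    · exact vF_eq_zero (hτt.trans_lt htT) hXinit hmem.2
    · rw [mem_singleton_iff.1 hmem] at hτt
      exact absurd htT hτt.not_gt

end stopping

/-- for `(s,x) ∈ D_T` and `t ∈ [s,T)`, almost surely
`v(t∧τ^{s,x}, X^{s,x}_{t∧τ^{s,x}}) = E[1_{A^{s,x}} | 𝔉_t]`, where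
`A^{s,x} = {X^{s,x}_u < g(u) ∀ u ∈ [s,T)}`; in particular the stopped process is a bounded
martingale on `[s,T)` with initial value `v(s,x) = P(A^{s,x})`. -/
theorem stopped_v_is_Doob_martingale
    [m : MeasurableSpace Ω] (P : Measure Ω) [IsProbabilityMeasure P]
    (F : Filtration ℝ m) (T x₀ α : ℝ) (hT : 0 < T) (hα : α ∈ Ioo (0:ℝ) 1)
    (μ σ : ℝ → ℝ → ℝ) (hC1 : CondC1 T μ σ) (hC2 : CondC2 T σ) (hC3 : CondC3 T α μ σ)
    (g : ℝ → ℝ) (hg : ContDiffOn ℝ 2 g (Icc 0 T)) (hg0 : x₀ < g 0)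
    (X : ℝ → ℝ → ℝ → Ω → ℝ)
    (hXad : ∀ s x : ℝ, Adapted F (X s x))
    (hXcont : ∀ s x : ℝ, ∀ ω, ContinuousOn (fun u => X s x u ω) (Icc s T))
    (hXinit : ∀ s x : ℝ, ∀ ω, X s x s ω = x)
    (hXmp : SolvesMP T μ σ P F X)
    :
    ∀ s x : ℝ, (s, x) ∈ DTset T g →
      (∀ t ∈ Ico s T,
        (fun ω => vF T g P X (min t (tauF T g X s x ω)) (X s x (min t (tauF T g X s x ω)) ω))
          =ᵐ[P]
        P[Set.indicator {ω | ∀ u ∈ Ico s T, X s x u ω < g u} (fun _ => (1 : ℝ))|F t]) ∧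
      MartingaleOn P F
        (fun t ω => vF T g P X (min t (tauF T g X s x ω)) (X s x (min t (tauF T g X s x ω)) ω))
        (Ico s T) ∧
      (∃ C : ℝ, ∀ t ∈ Ico s T, ∀ ω,
        |vF T g P X (min t (tauF T g X s x ω)) (X s x (min t (tauF T g X s x ω)) ω)| ≤ C) ∧
      (∀ ω, vF T g P X (min s (tauF T g X s x ω)) (X s x (min s (tauF T g X s x ω)) ω)
        = vF T g P X s x) ∧
      vF T g P X s x = (P {ω | ∀ u ∈ Ico s T, X s x u ω < g u}).toReal := by
  intro s x hsx
  obtain ⟨hs, hsT, -⟩ := hsx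
  obtain ⟨M, L, Φ, Φt, Φx, Φxx, h⟩ := exists_lampertiData hT hα hC1 hC2 hC3
  have hσ : ∀ t ∈ Ioo 0 T, ∀ x, 0 < σ t x := fun t ht => hC1.2.2.1 t ⟨ht.1.le, ht.2.le⟩
  have hgc : ContinuousOn g (Icc 0 T) := hg.continuousOn
  have hgs : ContinuousOn g (Icc s T) := hgc.mono (Icc_subset_Icc_left hs.le)
  have hv1 : ∀ t y, vF T g P X t y ∈ Icc 0 1 := fun t y =>
    ⟨ENNReal.toReal_nonneg, measureReal_le_one⟩
  set A : Set Ω := {ω | ∀ u ∈ Ico s T, X s x u ω < g u} with hA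
  set N : ℝ → Ω → ℝ := fun t ω =>
    vF T g P X (min t (tauF T g X s x ω)) (X s x (min t (tauF T g X s x ω)) ω) with hN
  have hNb : ∀ t ω, |N t ω| ≤ 1 := fun t ω => by
    rw [abs_of_nonneg (hv1 _ _).1]
    exact (hv1 _ _).2
  have hAm : MeasurableSet A :=
    (measure_inter_survives h hσ hgc hXad hXcont hXinit hXmp hs le_rfl hsT
      (x := x) (B := univ) MeasurableSet.univ).1
  have hNe : ∀ t ∈ Ico s T, N t = {ω | ∀ u ∈ Icc s t, X s x u ω < g u}.indicator
      (fun ω => vF T g P X t (X s x t ω)) := fun t ht =>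
    funext fun ω => stopped_eq ht.1 ht.2 hgs (hXcont s x ω) hXinit
  have hB : ∀ t ∈ Ico s T, MeasurableSet[F t] {ω | ∀ u ∈ Icc s t, X s x u ω < g u} := fun t ht =>
    measurableSet_survives_Icc ht.1 (hgs.mono (Icc_subset_Icc_right ht.2.le))
      (fun ω => (hXcont s x ω).mono (Icc_subset_Icc_right ht.2.le)) (hXad s x)
  have hNm : ∀ t ∈ Ico s T, StronglyMeasurable[F t] (N t) := fun t ht => by
    rw [hNe t ht]
    exact (((measurable_vF h hσ hgc hXad hXcont hXinit hXmp ⟨hs.trans_le ht.1, ht.2⟩).comp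
      (hXad s x t)).indicator (hB t ht)).stronglyMeasurable
  have hNi : ∀ t ∈ Ico s T, Integrable (N t) P := fun t ht =>
    Integrable.of_bound ((hNm t ht).mono (F.le t)).aestronglyMeasurable 1 (ae_of_all _ (hNb t))
  have hcond : ∀ t ∈ Ico s T, N t =ᵐ[P] P[A.indicator (fun _ => (1 : ℝ))|F t] := by
    intro t ht
    refine ae_eq_condExp_of_forall_setIntegral_eq (F.le t) ((integrable_const 1).indicator hAm)
      (fun D _ _ => (hNi t ht).integrableOn) (fun D hD _ => ?_) (hNm t ht).aestronglyMeasurable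
    have hDB : MeasurableSet[F t] (D ∩ {ω | ∀ u ∈ Icc s t, X s x u ω < g u}) := hD.inter (hB t ht)
    have hAe : D ∩ A = (D ∩ {ω | ∀ u ∈ Icc s t, X s x u ω < g u})
        ∩ {ω | ∀ u ∈ Ico t T, X s x u ω < g u} := by
      ext ω
      constructor
      · rintro ⟨hD, hω⟩
        exact ⟨⟨hD, fun u hu => hω u ⟨hu.1, hu.2.trans_lt ht.2⟩⟩,
          fun u hu => hω u ⟨ht.1.trans hu.1, hu.2⟩⟩
      · rintro ⟨⟨hD, h1⟩, h2⟩
        refine ⟨hD, fun u hu => ?_⟩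
        rcases le_total u t with hut | hut
        · exact h1 u ⟨hu.1, hut⟩
        · exact h2 u ⟨hut, hu.2⟩
    rw [hNe t ht, setIntegral_indicator (F.le t _ (hB t ht)),
      ← (measure_inter_survives h hσ hgc hXad hXcont hXinit hXmp hs ht.1 ht.2 hDB).2, ← hAe,
      setIntegral_indicator hAm]
    simp
  refine ⟨hcond, ⟨fun t ht => ⟨hNm t ht, hNi t ht⟩, fun t₁ ht₁ t₂ ht₂ h12 => ?_⟩,
    ⟨1, fun t _ ω => hNb t ω⟩, fun ω => ?_, rfl⟩
  · -- the tower property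
    exact ((condExp_congr_ae (hcond t₂ ht₂)).trans
      (condExp_condExp_of_le (F.mono h12) (F.le t₂))).trans (hcond t₁ ht₁).symm
  · have hle : s ≤ tauF T g X s x ω := by
      refine le_csInf ⟨T, Or.inr rfl⟩ ?_
      rintro r (hr | hr)
      · exact hr.1.1
      · rw [mem_singleton_iff.1 hr]; exact hsT.le
    rw [min_eq_left hle, hXinit]
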